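/- arXiv:0709.2466 — 3 statements merged into one kernel-verified Lean document; each statement's English description precedes it below -/
import Mathlib

section
/- Let A be an n×n quaternion matrix all of whose right eigenvalues are real. Then there exist a positive integer s, positive integers n₁,…,n_s with n₁+⋯+n_s = n, real numbers λ₁ ≥ λ₂ ≥ ⋯ ≥ λ_s, and a quaternion unitary matrix U such that F = U*AU is block upper triangular with respect to the partition (n₁,…,n_s), the diagonal blocks are F_{ii} = λ_i·I_{n_i}, and whenever λ_i = λ_{i+1} one has n_i ≥ n_{i+1} and the superdiagonal block F_{i,i+1} (of size n_i×n_{i+1}) is upper triangular with all diagonal entries positive real numbers. -/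
open Matrix
open scoped Quaternion

noncomputable section

/-- A quaternion matrix `U` is unitary if `Uᴴ * U = 1`. -/
def IsUnitaryM {m : Type*} [Fintype m] [DecidableEq m] (U : Matrix m m ℍ[ℝ]) : Prop :=
  Uᴴ * U = 1

/-- `A` and `B` are unitarily similar if `A = Uᴴ * B * U` for some unitary `U`. -/
def UnitarilySimilar {m : Type*} [Fintype m] [DecidableEq m] (A B : Matrix m m ℍ[ℝ]) : Prop :=
  ∃ U : Matrix m m ℍ[ℝ], IsUnitaryM U ∧ A = Uᴴ * B * U

/-- `λ ∈ ℍ` is a right eigenvalue of `A`: `A v = v λ` for some nonzero `v`. -/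
def IsRightEigenvalue {n : ℕ} (A : Matrix (Fin n) (Fin n) ℍ[ℝ]) (lam : ℍ[ℝ]) : Prop :=
  ∃ v : Fin n → ℍ[ℝ], v ≠ 0 ∧ A.mulVec v = fun i => v i * lam

/-- All right eigenvalues of `A` are real. -/
def HasRealSpectrum {n : ℕ} (A : Matrix (Fin n) (Fin n) ℍ[ℝ]) : Prop :=
  ∀ lam : ℍ[ℝ], IsRightEigenvalue A lam → ∃ r : ℝ, lam = (r : ℍ[ℝ])

/-- `psum sz m` is the sum of the first `m` block sizes: the starting index of block `m`. -/
def psum {s : ℕ} (sz : Fin s → ℕ) (m : ℕ) : ℕ :=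
  ∑ t ∈ Finset.range m, if h : t < s then sz ⟨t, h⟩ else 0

/-- Row/column index `r` belongs to the `i`-th diagonal block of the partition `sz`. -/
def InBlock {s : ℕ} (sz : Fin s → ℕ) (i : Fin s) (r : ℕ) : Prop :=
  psum sz i ≤ r ∧ r < psum sz ((i : ℕ) + 1)

/-- The strengthened Schur form (for real eigenvalues): block upper triangular w.r.t. the
partition `sz` with `s` diagonal blocks `lam i • I`, `lam` nonincreasing, and whenever two
consecutive eigenvalues coincide the block sizes do not increase and the superdiagonal block
is upper triangular with positive real diagonal entries. -/
def StrengthenedSchurForm {n : ℕ} (s : ℕ) (sz : Fin s → ℕ) (lam : Fin s → ℝ)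
    (F : Matrix (Fin n) (Fin n) ℍ[ℝ]) : Prop :=
  (∀ i, 0 < sz i) ∧ (∑ i, sz i) = n ∧
  (∀ i j : Fin s, i ≤ j → lam j ≤ lam i) ∧
  (∀ (r c : Fin n) (i j : Fin s), InBlock sz i r → InBlock sz j c → j < i → F r c = 0) ∧
  (∀ (r c : Fin n) (i : Fin s), InBlock sz i r → InBlock sz i c →
      F r c = if r = c then (lam i : ℍ[ℝ]) else 0) ∧
  (∀ (i : Fin s) (h : (i : ℕ) + 1 < s), lam i = lam ⟨(i : ℕ) + 1, h⟩ →
      sz ⟨(i : ℕ) + 1, h⟩ ≤ sz i ∧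
      ∀ r c : Fin n, InBlock sz i r → InBlock sz ⟨(i : ℕ) + 1, h⟩ c →
        ((c : ℕ) - psum sz ((i : ℕ) + 1) < (r : ℕ) - psum sz i → F r c = 0) ∧
        ((c : ℕ) - psum sz ((i : ℕ) + 1) = (r : ℕ) - psum sz i →
          ∃ b : ℝ, 0 < b ∧ F r c = (b : ℍ[ℝ])))

theorem exists_isRightEigenvalue {n : ℕ} [NeZero n] (A : Matrix (Fin n) (Fin n) ℍ[ℝ]) :
    ∃ lam : ℍ[ℝ], IsRightEigenvalue A lam := by
  let φ : ℂ →+* ℍ[ℝ]ᵐᵒᵖ :=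
    Quaternion.ofComplex.toRingHom.toOpposite fun x y => (Commute.all x y).map Quaternion.ofComplex
  let : Module ℂ (Fin n → ℍ[ℝ]) := Module.compHom _ φ
  have hs (c : ℂ) (v : Fin n → ℍ[ℝ]) : c • v = fun i => v i * Quaternion.ofComplex c := rfl
  have : IsScalarTower ℝ ℂ (Fin n → ℍ[ℝ]) := ⟨fun x y z => by
    rw [hs, hs]
    ext1 i
    simp only [Pi.smul_apply, map_smul, mul_smul_comm]⟩
  have : Module.Finite ℂ (Fin n → ℍ[ℝ]) := Module.Finite.of_restrictScalars_finite ℝ ℂ _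
  let T : Module.End ℂ (Fin n → ℍ[ℝ]) :=
    { toFun := A.mulVec
      map_add' := A.mulVec_add
      map_smul' := fun c v => by
        ext1 i
        simp only [hs, RingHom.id_apply, mulVec, dotProduct, Finset.sum_mul, mul_assoc] }
  obtain ⟨c, hc⟩ := Module.End.exists_eigenvalue T
  obtain ⟨v, hv⟩ := hc.exists_hasEigenvector
  exact ⟨Quaternion.ofComplex c, v, hv.2, hv.apply_eq_smul⟩

theorem HasRealSpectrum.exists_max {n : ℕ} [NeZero n] {A : Matrix (Fin n) (Fin n) ℍ[ℝ]}
    (hA : HasRealSpectrum A) :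
    ∃ μ : ℝ, IsRightEigenvalue A (μ : ℍ[ℝ]) ∧
      ∀ r : ℝ, IsRightEigenvalue A (r : ℍ[ℝ]) → r ≤ μ := by
  let T : Module.End ℝ (Fin n → ℍ[ℝ]) :=
    { toFun := A.mulVec
      map_add' := A.mulVec_add
      map_smul' := fun c v => A.mulVec_smul c v }
  have hfin : {r : ℝ | IsRightEigenvalue A (r : ℍ[ℝ])}.Finite := by
    refine (Module.End.finite_hasEigenvalue T).subset ?_
    rintro r ⟨v, hv, h⟩
    refine Module.End.hasEigenvalue_of_hasEigenvector (x := v)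
      ⟨Module.End.mem_eigenspace_iff.2 (h.trans ?_), hv⟩
    ext1 i
    rw [Pi.smul_apply, ← Quaternion.coe_mul_eq_smul, Quaternion.coe_commutes]
  obtain ⟨lam, hlam⟩ := exists_isRightEigenvalue A
  obtain ⟨r, rfl⟩ := hA lam hlam
  obtain ⟨μ, hμ, hmax⟩ := hfin.exists_maximal ⟨r, hlam⟩
  exact ⟨μ, hμ, fun r hr => (le_total r μ).elim id (hmax hr)⟩

theorem coe_sum {ι : Type*} (s : Finset ι) (f : ι → ℝ) :
    ((∑ i ∈ s, f i : ℝ) : ℍ[ℝ]) = ∑ i ∈ s, (f i : ℍ[ℝ]) :=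
  map_sum (algebraMap ℝ ℍ[ℝ]) f s

theorem exists_unitary_mulVec_eq_single {n : ℕ} (b : Fin (n + 1) → ℍ[ℝ]) :
    ∃ Q ∈ unitary (Matrix (Fin (n + 1)) (Fin (n + 1)) ℍ[ℝ]), ∃ t : ℝ, 0 ≤ t ∧
      Q *ᵥ b = Pi.single 0 (t : ℍ[ℝ]) := by
  obtain ⟨D, hD, β, hβ⟩ : ∃ D ∈ unitary (Matrix (Fin (n + 1)) (Fin (n + 1)) ℍ[ℝ]),
      ∃ β : ℝ, (D *ᵥ b) 0 = (β : ℍ[ℝ]) := by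
    by_cases h0 : b 0 = 0
    · exact ⟨1, one_mem _, 0, by simp [h0]⟩
    have hn : ‖b 0‖ ≠ 0 := norm_ne_zero_iff.2 h0
    have h1 : star (b 0) * b 0 = ((‖b 0‖ ^ 2 : ℝ) : ℍ[ℝ]) := by
      rw [Quaternion.star_mul_self, Quaternion.normSq_eq_norm_mul_self, sq]
    have h2 : b 0 * star (b 0) = ((‖b 0‖ ^ 2 : ℝ) : ℍ[ℝ]) := by
      rw [Quaternion.self_mul_star, Quaternion.normSq_eq_norm_mul_self, sq]
    have key : (‖b 0‖⁻¹ : ℝ) * (‖b 0‖⁻¹ * ‖b 0‖ ^ 2) = 1 := by field_simp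
    let d : Fin (n + 1) → ℍ[ℝ] := Fin.cons (‖b 0‖⁻¹ • star (b 0)) fun _ => 1
    have hd1 (i) : star (d i) * d i = 1 := by
      refine Fin.cases ?_ (fun i => ?_) i
      · simp only [d, Fin.cons_zero, Quaternion.star_smul, star_star, smul_mul_assoc, mul_smul_comm, h2,
          Quaternion.smul_coe, key, Quaternion.coe_one]
      · simp [d]
    have hd2 (i) : d i * star (d i) = 1 := by
      refine Fin.cases ?_ (fun i => ?_) i
      · simp only [d, Fin.cons_zero, Quaternion.star_smul, star_star, smul_mul_assoc, mul_smul_comm, h1,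
          Quaternion.smul_coe, key, Quaternion.coe_one]
      · simp [d]
    refine ⟨diagonal d, ?_, ‖b 0‖⁻¹ * ‖b 0‖ ^ 2, ?_⟩
    · rw [Unitary.mem_iff, star_eq_conjTranspose, diagonal_conjTranspose, diagonal_mul_diagonal,
        diagonal_mul_diagonal]
      simp [hd1, hd2]
    · rw [mulVec_diagonal]
      simp only [d, Fin.cons_zero, smul_mul_assoc, h1, Quaternion.smul_coe]
  set x := D *ᵥ b with hx
  set S : ℝ := ∑ i, Quaternion.normSq (x i) with hS
  have hS0 : 0 ≤ S := Finset.sum_nonneg fun i _ => Quaternion.normSq_nonneg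
  set t := √S with ht
  have htt : t * t = S := Real.mul_self_sqrt hS0
  set w : Fin (n + 1) → ℍ[ℝ] := x - Pi.single 0 (t : ℍ[ℝ]) with hw
  by_cases hw0 : w = 0
  · exact ⟨D, hD, t, Real.sqrt_nonneg _, sub_eq_zero.1 hw0⟩
  have hwx : ∑ i, star (w i) * x i = ((S - t * β : ℝ) : ℍ[ℝ]) := by
    simp only [hw, Pi.sub_apply, star_sub, sub_mul, Finset.sum_sub_distrib, Quaternion.star_mul_self]
    have : ∑ i, star ((Pi.single 0 (t : ℍ[ℝ]) : Fin (n + 1) → ℍ[ℝ]) i) * x i = t * β := by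
      rw [Finset.sum_eq_single 0]
      · simp [hβ]
      · intro i _ hi
        simp [hi]
      · simp
    rw [this, hS, ← Quaternion.coe_mul, ← coe_sum, ← Quaternion.coe_sub]
  have hww : ∑ i, star (w i) * w i = ((2 * (S - t * β) : ℝ) : ℍ[ℝ]) := by
    have : ∑ i, star (w i) * (Pi.single 0 (t : ℍ[ℝ]) : Fin (n + 1) → ℍ[ℝ]) i
        = ((β * t - t * t : ℝ) : ℍ[ℝ]) := by
      rw [Finset.sum_eq_single 0]
      · simp [hw, hβ, sub_mul]
      · intro i _ hi
        simp [hi]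
      · simp
    calc _ = ∑ i, star (w i) * x i - ∑ i, star (w i) *
          (Pi.single 0 (t : ℍ[ℝ]) : Fin (n + 1) → ℍ[ℝ]) i := by
          rw [← Finset.sum_sub_distrib]
          simp only [hw, Pi.sub_apply, mul_sub]
      _ = _ := by
          rw [hwx, this, ← Quaternion.coe_sub, htt]
          congr 1
          ring
  set c := S - t * β with hc
  have hc0 : c ≠ 0 := by
    intro h
    rw [h, mul_zero] at hww
    have h2 : ∑ i, Quaternion.normSq (w i) = 0 := by
      simp only [Quaternion.star_mul_self, ← coe_sum] at hww
      exact Quaternion.coe_injective hww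
    rw [Finset.sum_eq_zero_iff_of_nonneg fun i _ => Quaternion.normSq_nonneg] at h2
    exact hw0 (funext fun i => Quaternion.normSq_eq_zero.1 (h2 i (Finset.mem_univ i)))
  let W : Matrix (Fin (n + 1)) Unit ℍ[ℝ] := replicateCol Unit w
  have hWW : Wᴴ * W = (2 * c) • 1 := by
    ext1 i j
    rw [mul_apply, Matrix.smul_apply, one_apply_eq]
    simpa [W, ← Quaternion.coe_mul_eq_smul] using hww
  have hWx : Wᴴ *ᵥ x = fun _ => (c : ℍ[ℝ]) := by
    ext1 i
    simpa [W, mulVec, dotProduct] using hwx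
  let H : Matrix (Fin (n + 1)) (Fin (n + 1)) ℍ[ℝ] := 1 - c⁻¹ • (W * Wᴴ)
  have hstar : star H = H := by
    ext1 i j
    simp [H, W, mul_apply, one_apply, Quaternion.star_smul, apply_ite star,
      eq_comm (a := i)]
  have hP : (W * Wᴴ) * (W * Wᴴ) = (2 * c) • (W * Wᴴ) := by
    rw [Matrix.mul_assoc, ← Matrix.mul_assoc Wᴴ, hWW]
    simp
  have hHH : H * H = 1 := by
    simp only [H, sub_mul, mul_sub, one_mul, mul_one, smul_mul_assoc, mul_smul_comm, hP, smul_smul]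
    rw [show c⁻¹ * (2 * c) = 2 by field_simp, two_smul, smul_sub, smul_add]
    abel
  have hH : H ∈ unitary (Matrix (Fin (n + 1)) (Fin (n + 1)) ℍ[ℝ]) :=
    Unitary.mem_iff.2 ⟨by rw [hstar, hHH], by rw [hstar, hHH]⟩
  refine ⟨H * D, mul_mem hH hD, t, Real.sqrt_nonneg _, ?_⟩
  rw [← mulVec_mulVec, ← hx]
  have : (c⁻¹ • (W * Wᴴ)) *ᵥ x = w := by
    rw [smul_mulVec, ← mulVec_mulVec, hWx]
    ext1 i
    simp [W, mulVec, dotProduct, ← Quaternion.coe_commutes, Quaternion.coe_mul_eq_smul, smul_smul, hc0]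
  rw [sub_mulVec, one_mulVec, this, hw, sub_sub_cancel]

/-- The matrix of `Q` extended by a fixed first basis vector. -/
def oneDirectSum {n : ℕ} (Q : Matrix (Fin n) (Fin n) ℍ[ℝ]) :
    Matrix (Fin (n + 1)) (Fin (n + 1)) ℍ[ℝ] :=
  of (Fin.cons (Fin.cons 1 0) fun i => Fin.cons 0 (Q i))

section oneDirectSum

variable {n : ℕ} (Q : Matrix (Fin n) (Fin n) ℍ[ℝ])

@[simp] theorem oneDirectSum_zero_zero : oneDirectSum Q 0 0 = 1 := rfl

@[simp] theorem oneDirectSum_zero_succ (j : Fin n) : oneDirectSum Q 0 j.succ = 0 := rfl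

@[simp] theorem oneDirectSum_succ_zero (i : Fin n) : oneDirectSum Q i.succ 0 = 0 := rfl

@[simp] theorem oneDirectSum_succ_succ (i j : Fin n) :
    oneDirectSum Q i.succ j.succ = Q i j := rfl

theorem conjTranspose_oneDirectSum : (oneDirectSum Q)ᴴ = oneDirectSum Qᴴ := by
  ext1 i j
  refine Fin.cases ?_ (fun i => ?_) i <;> refine Fin.cases ?_ (fun j => ?_) j <;> simp

theorem oneDirectSum_mul (R : Matrix (Fin n) (Fin n) ℍ[ℝ]) :
    oneDirectSum Q * oneDirectSum R = oneDirectSum (Q * R) := by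
  ext1 i j
  refine Fin.cases ?_ (fun i => ?_) i <;> refine Fin.cases ?_ (fun j => ?_) j <;>
    simp [mul_apply, Fin.sum_univ_succ]

theorem oneDirectSum_one : oneDirectSum (1 : Matrix (Fin n) (Fin n) ℍ[ℝ]) = 1 := by
  ext1 i j
  refine Fin.cases ?_ (fun i => ?_) i <;> refine Fin.cases ?_ (fun j => ?_) j <;>
    simp [one_apply, Fin.succ_ne_zero, (Fin.succ_ne_zero _).symm]

variable {Q} in
theorem oneDirectSum_mem_unitary (hQ : Q ∈ unitary (Matrix (Fin n) (Fin n) ℍ[ℝ])) :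
    oneDirectSum Q ∈ unitary (Matrix (Fin (n + 1)) (Fin (n + 1)) ℍ[ℝ]) := by
  obtain ⟨h1, h2⟩ := Unitary.mem_iff.1 hQ
  rw [star_eq_conjTranspose] at h1 h2
  rw [Unitary.mem_iff, star_eq_conjTranspose, conjTranspose_oneDirectSum, oneDirectSum_mul,
    oneDirectSum_mul, h1, h2, oneDirectSum_one]
  exact ⟨rfl, rfl⟩

end oneDirectSum

/-- QR factorization of a quaternion matrix. -/
theorem exists_unitary_mul_upperTriangular : ∀ {k m : ℕ} (R : Matrix (Fin k) (Fin m) ℍ[ℝ]),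
    ∃ Q ∈ unitary (Matrix (Fin k) (Fin k) ℍ[ℝ]),
      (∀ (r : Fin k) (c : Fin m), (c : ℕ) < r → (Q * R) r c = 0) ∧
      ∀ (r : Fin k) (c : Fin m), (c : ℕ) = r → ∃ b : ℝ, 0 ≤ b ∧ (Q * R) r c = (b : ℍ[ℝ])
  | 0, _, _ => ⟨1, one_mem _, fun r => r.elim0, fun r => r.elim0⟩
  | _ + 1, 0, _ => ⟨1, one_mem _, fun _ c => c.elim0, fun _ c => c.elim0⟩
  | k + 1, m + 1, R => by
    obtain ⟨Q₁, hQ₁, t, ht, h₁⟩ := exists_unitary_mulVec_eq_single fun i => R i 0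
    obtain ⟨Q₂, hQ₂, hlow, hdiag⟩ :=
      exists_unitary_mul_upperTriangular ((Q₁ * R).submatrix Fin.succ Fin.succ)
    have hcol (i) : (Q₁ * R) i 0 = (Pi.single 0 (t : ℍ[ℝ]) : Fin (k + 1) → ℍ[ℝ]) i :=
      congrFun h₁ i
    have h00 : (oneDirectSum Q₂ * Q₁ * R) 0 0 = t := by
      simp [Matrix.mul_assoc, mul_apply (M := oneDirectSum Q₂), Fin.sum_univ_succ, hcol]
    have hs0 (i : Fin k) : (oneDirectSum Q₂ * Q₁ * R) i.succ 0 = 0 := by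
      simp [Matrix.mul_assoc, mul_apply (M := oneDirectSum Q₂), Fin.sum_univ_succ, hcol]
    have hss (i : Fin k) (j : Fin m) : (oneDirectSum Q₂ * Q₁ * R) i.succ j.succ =
        (Q₂ * (Q₁ * R).submatrix Fin.succ Fin.succ) i j := by
      rw [Matrix.mul_assoc, mul_apply, mul_apply (M := Q₂), Fin.sum_univ_succ]
      simp
    refine ⟨oneDirectSum Q₂ * Q₁, mul_mem (oneDirectSum_mem_unitary hQ₂) hQ₁, ?_, ?_⟩
    · intro r c
      refine Fin.cases ?_ (fun r => ?_) r <;> refine Fin.cases ?_ (fun c => ?_) c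
      · simp
      · simp
      · exact fun _ => hs0 r
      · intro h
        rw [hss]
        exact hlow r c (by simpa using h)
    · intro r c
      refine Fin.cases ?_ (fun r => ?_) r <;> refine Fin.cases ?_ (fun c => ?_) c
      · exact fun _ => ⟨t, ht, h00⟩
      · simp
      · simp
      · intro h
        rw [hss]
        exact hdiag r c (by simpa using h)

/-- A unitary change of basis puts the null space of a matrix in front. -/
theorem exists_unitary_mul_nullSpace : ∀ {n : ℕ} {p : Type*} (M : Matrix p (Fin n) ℍ[ℝ]),
    ∃ U ∈ unitary (Matrix (Fin n) (Fin n) ℍ[ℝ]), ∃ k ≤ n,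
      (∀ i, ∀ j : Fin n, (j : ℕ) < k → (M * U) i j = 0) ∧
      ∀ v : Fin n → ℍ[ℝ], (∀ j : Fin n, (j : ℕ) < k → v j = 0) → (M * U) *ᵥ v = 0 → v = 0
  | 0, _, _ => ⟨1, one_mem _, 0, le_rfl, by simp, fun v _ _ => Subsingleton.elim _ _⟩
  | n + 1, p, M => by
    by_cases hM : ∀ v, M *ᵥ v = 0 → v = 0
    · exact ⟨1, one_mem _, 0, Nat.zero_le _, by simp, fun v _ h => hM v (by simpa using h)⟩
    push Not at hM
    obtain ⟨v, hv, hv0⟩ := hM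
    obtain ⟨Q, hQ, t, -, hQv⟩ := exists_unitary_mulVec_eq_single v
    have hvt : v = star Q *ᵥ Pi.single 0 (t : ℍ[ℝ]) := by
      rw [← hQv, mulVec_mulVec, Unitary.star_mul_self_of_mem hQ, one_mulVec]
    have ht : (t : ℍ[ℝ]) ≠ 0 := by
      intro h
      rw [h, Pi.single_zero, mulVec_zero] at hvt
      exact hv0 hvt
    have hcol (i) : (M * star Q) i 0 = 0 := by
      rw [hvt, mulVec_mulVec] at hv
      rw [mulVec_single] at hv
      simpa [ht] using congrFun hv i
    obtain ⟨U, hU, k, hk, hz, hinj⟩ :=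
      exists_unitary_mul_nullSpace ((M * star Q).submatrix id Fin.succ)
    have h0 (i) : (M * (star Q * oneDirectSum U)) i 0 = 0 := by
      rw [← Matrix.mul_assoc, mul_apply, Fin.sum_univ_succ]
      simp [hcol]
    have hs (i) (j : Fin n) : (M * (star Q * oneDirectSum U)) i j.succ =
        ((M * star Q).submatrix id Fin.succ * U) i j := by
      rw [← Matrix.mul_assoc, mul_apply, mul_apply (N := U), Fin.sum_univ_succ]
      simp
    refine ⟨star Q * oneDirectSum U,
      mul_mem (Unitary.star_mem hQ) (oneDirectSum_mem_unitary hU), k + 1, by lia, ?_, ?_⟩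
    · intro i j
      refine Fin.cases ?_ (fun j => ?_) j
      · exact fun _ => h0 i
      · intro h
        rw [hs]
        exact hz i j (by simpa using h)
    · intro v hvk hv
      have hv0 : v 0 = 0 := hvk 0 (by simp)
      have : (fun j : Fin n => v j.succ) = 0 := by
        refine hinj _ (fun j hj => hvk j.succ (by simpa using hj)) ?_
        ext1 i
        have := congrFun hv i
        simp only [mulVec, dotProduct, Fin.sum_univ_succ, hv0, mul_zero, zero_add, hs] at this
        exact this
      ext1 j
      exact Fin.cases hv0 (congrFun this) j

theorem diag_ne_zero_of_injective {k m : ℕ} {R : Matrix (Fin k) (Fin m) ℍ[ℝ]}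
    {G : Matrix (Fin m) (Fin m) ℍ[ℝ]} {d : ℕ}
    (hlow : ∀ (r : Fin k) (c : Fin m), (c : ℕ) < r → R r c = 0)
    (hG : ∀ r c : Fin m, (c : ℕ) < d → G r c = 0)
    (hinj : ∀ v, R *ᵥ v = 0 → G *ᵥ v = 0 → v = 0) (c : Fin m) (hc : (c : ℕ) < d) :
    ∃ h : (c : ℕ) < k, R ⟨c, h⟩ c ≠ 0 := by
  by_contra! hcon
  let L : (Fin m → ℍ[ℝ]) →ₗ[ℝ] (Fin m → ℍ[ℝ]) :=
    { toFun := fun v j =>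
        if j < c then (if h : (j : ℕ) < k then (R *ᵥ v) ⟨j, h⟩ else 0)
        else if j = c then 0 else v j
      map_add' := fun v w => by
        ext1 j
        simp only [mulVec_add, Pi.add_apply]
        split_ifs <;> simp
      map_smul' := fun a v => by
        ext1 j
        simp only [mulVec_smul, Pi.smul_apply, RingHom.id_apply]
        split_ifs <;> simp }
  have hL (v j) : L v j = if j < c then (if h : (j : ℕ) < k then (R *ᵥ v) ⟨j, h⟩ else 0)
        else if j = c then 0 else v j := rfl
  have hns : ¬ Function.Surjective L := fun h => by
    obtain ⟨v, hv⟩ := h (Pi.single c 1)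
    have := congrFun hv c
    simp [hL] at this
  have hni : ¬ Function.Injective L := fun h => hns (LinearMap.injective_iff_surjective.1 h)
  rw [injective_iff_map_eq_zero] at hni
  push Not at hni
  obtain ⟨v, hv, hv0⟩ := hni
  have hvz (j : Fin m) (hj : c < j) : v j = 0 := by
    have := congrFun hv j
    simpa [hL, hj.not_gt, hj.ne'] using this
  refine hv0 (hinj v ?_ ?_)
  · ext1 r
    rcases lt_or_ge (r : ℕ) c with h | h
    · have := congrFun hv ⟨r, h.trans c.2⟩
      simpa [hL, Fin.lt_def, h] using this
    · rw [mulVec, dotProduct, Pi.zero_apply]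
      refine Finset.sum_eq_zero fun j _ => ?_
      rcases lt_or_ge c j with hj | hj
      · rw [hvz j hj, mul_zero]
      rcases lt_or_ge (j : ℕ) r with hjr | hjr
      · rw [hlow r j hjr, zero_mul]
      have hjc : j = c := le_antisymm hj (Fin.le_def.2 (h.trans hjr))
      subst hjc
      have hr : r = ⟨j, (le_antisymm hjr h) ▸ r.2⟩ := Fin.ext (le_antisymm hjr h)
      rw [hr, hcon, zero_mul]
  · ext1 r
    rw [mulVec, dotProduct, Pi.zero_apply]
    refine Finset.sum_eq_zero fun j _ => ?_
    rcases lt_or_ge c j with hj | hj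
    · rw [hvz j hj, mul_zero]
    · rw [hG r j (lt_of_le_of_lt hj hc), zero_mul]

theorem mulVec_mul_right {m n : Type*} [Fintype n] (M : Matrix m n ℍ[ℝ]) (v : n → ℍ[ℝ])
    (q : ℍ[ℝ]) : (M *ᵥ fun i => v i * q) = fun i => (M *ᵥ v) i * q := by
  ext1 i
  simp only [mulVec, dotProduct, Finset.sum_mul, mul_assoc]

theorem eq_zero_of_unitary_mulVec {m : Type*} [Fintype m] [DecidableEq m] {U : Matrix m m ℍ[ℝ]}
    (hU : U ∈ unitary (Matrix m m ℍ[ℝ])) {v : m → ℍ[ℝ]} (h : U *ᵥ v = 0) : v = 0 := by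
  rw [← one_mulVec v, ← Unitary.star_mul_self_of_mem hU, ← mulVec_mulVec, h, mulVec_zero]

theorem IsRightEigenvalue.of_unitary_conj {n : ℕ} {A U : Matrix (Fin n) (Fin n) ℍ[ℝ]}
    (hU : U ∈ unitary (Matrix (Fin n) (Fin n) ℍ[ℝ])) {lam : ℍ[ℝ]}
    (h : IsRightEigenvalue (Uᴴ * A * U) lam) : IsRightEigenvalue A lam := by
  obtain ⟨v, hv, hev⟩ := h
  refine ⟨U *ᵥ v, fun h => hv (eq_zero_of_unitary_mulVec hU h), ?_⟩
  rw [← mulVec_mul_right, ← hev, mulVec_mulVec, mulVec_mulVec, ← Matrix.mul_assoc,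
    ← Matrix.mul_assoc, ← star_eq_conjTranspose, Unitary.mul_star_self_of_mem hU, Matrix.one_mul]

/-- A `2 × 2` block matrix, indexed by `Fin (k + m)`. -/
def finBlocks {k m : ℕ} (A : Matrix (Fin k) (Fin k) ℍ[ℝ]) (B : Matrix (Fin k) (Fin m) ℍ[ℝ])
    (C : Matrix (Fin m) (Fin k) ℍ[ℝ]) (D : Matrix (Fin m) (Fin m) ℍ[ℝ]) :
    Matrix (Fin (k + m)) (Fin (k + m)) ℍ[ℝ] :=
  (fromBlocks A B C D).submatrix finSumFinEquiv.symm finSumFinEquiv.symm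

section finBlocks

variable {k m : ℕ} (A A' : Matrix (Fin k) (Fin k) ℍ[ℝ]) (B B' : Matrix (Fin k) (Fin m) ℍ[ℝ])
    (C C' : Matrix (Fin m) (Fin k) ℍ[ℝ]) (D D' : Matrix (Fin m) (Fin m) ℍ[ℝ])

@[simp] theorem finBlocks_castAdd_castAdd (i j : Fin k) :
    finBlocks A B C D (Fin.castAdd m i) (Fin.castAdd m j) = A i j := by
  simp [finBlocks]

@[simp] theorem finBlocks_castAdd_natAdd (i : Fin k) (j : Fin m) :
    finBlocks A B C D (Fin.castAdd m i) (Fin.natAdd k j) = B i j := by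
  simp [finBlocks]

@[simp] theorem finBlocks_natAdd_castAdd (i : Fin m) (j : Fin k) :
    finBlocks A B C D (Fin.natAdd k i) (Fin.castAdd m j) = C i j := by
  simp [finBlocks]

@[simp] theorem finBlocks_natAdd_natAdd (i j : Fin m) :
    finBlocks A B C D (Fin.natAdd k i) (Fin.natAdd k j) = D i j := by
  simp [finBlocks]

theorem finBlocks_mul : finBlocks A B C D * finBlocks A' B' C' D' =
    finBlocks (A * A' + B * C') (A * B' + B * D') (C * A' + D * C') (C * B' + D * D') := by
  rw [finBlocks, finBlocks, submatrix_mul_equiv, fromBlocks_multiply, finBlocks]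

theorem conjTranspose_finBlocks : (finBlocks A B C D)ᴴ = finBlocks Aᴴ Cᴴ Bᴴ Dᴴ := by
  rw [finBlocks, conjTranspose_submatrix, fromBlocks_conjTranspose, finBlocks]

theorem finBlocks_one : finBlocks (1 : Matrix (Fin k) (Fin k) ℍ[ℝ]) 0 0
    (1 : Matrix (Fin m) (Fin m) ℍ[ℝ]) = 1 := by
  rw [finBlocks, fromBlocks_one, submatrix_one_equiv]

theorem finBlocks_mulVec_append (x : Fin k → ℍ[ℝ]) (y : Fin m → ℍ[ℝ]) :
    finBlocks A B C D *ᵥ Fin.append x y =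
      Fin.append (A *ᵥ x + B *ᵥ y) (C *ᵥ x + D *ᵥ y) := by
  ext1 i
  refine Fin.addCases (fun i => ?_) (fun i => ?_) i <;>
    simp [mulVec, dotProduct, Fin.sum_univ_add]

variable {A D} in
theorem finBlocks_mem_unitary (hA : A ∈ unitary (Matrix (Fin k) (Fin k) ℍ[ℝ]))
    (hD : D ∈ unitary (Matrix (Fin m) (Fin m) ℍ[ℝ])) :
    finBlocks A 0 0 D ∈ unitary (Matrix (Fin (k + m)) (Fin (k + m)) ℍ[ℝ]) := by
  obtain ⟨hA1, hA2⟩ := Unitary.mem_iff.1 hA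
  obtain ⟨hD1, hD2⟩ := Unitary.mem_iff.1 hD
  rw [star_eq_conjTranspose] at hA1 hA2 hD1 hD2
  rw [Unitary.mem_iff, star_eq_conjTranspose, conjTranspose_finBlocks, finBlocks_mul,
    finBlocks_mul]
  simp [hA1, hA2, hD1, hD2, finBlocks_one]

variable {B D} in
theorem IsRightEigenvalue.of_finBlocks {μ : ℝ} {lam : ℍ[ℝ]} (h : IsRightEigenvalue D lam)
    (hne : lam ≠ μ) : IsRightEigenvalue (finBlocks (μ • 1) B 0 D) lam := by
  obtain ⟨y, hy, hev⟩ := h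
  have hne' : lam - μ ≠ 0 := sub_ne_zero.2 hne
  refine ⟨Fin.append (fun i => (B *ᵥ y) i * (lam - μ)⁻¹) y, fun h => hy ?_, ?_⟩
  · ext1 i
    simpa using congrFun h (Fin.natAdd k i)
  · rw [finBlocks_mulVec_append]
    ext1 i
    refine Fin.addCases (fun i => ?_) (fun i => ?_) i
    · have h : (B *ᵥ y) i = (B *ᵥ y) i * (lam - μ)⁻¹ * (lam - μ) := by
        rw [mul_assoc, inv_mul_cancel₀ hne', mul_one]
      simp only [Fin.append_left, smul_mulVec, one_mulVec, Pi.add_apply, Pi.smul_apply,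
        ← Quaternion.coe_mul_eq_smul, Quaternion.coe_commutes]
      generalize (B *ᵥ y) i * (lam - μ)⁻¹ = z at h
      rw [h, mul_sub, add_sub_cancel]
    · simp [hev]

end finBlocks

section psum

variable {s : ℕ} (k : ℕ) (sz : Fin s → ℕ)

theorem psum_zero : psum sz 0 = 0 := rfl

theorem psum_cons_succ (j : ℕ) :
    psum (Fin.cons k sz : Fin (s + 1) → ℕ) (j + 1) = k + psum sz j := by
  rw [psum, Finset.sum_range_succ', add_comm]
  congr 1
  refine Finset.sum_congr rfl fun t _ => ?_
  by_cases h : t < s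
  · rw [dif_pos h, dif_pos (Nat.succ_lt_succ h)]
    exact Fin.cons_succ (α := fun _ => ℕ) k sz ⟨t, h⟩
  · rw [dif_neg h, dif_neg (by lia)]

theorem inBlock_cons_zero (r : ℕ) :
    InBlock (Fin.cons k sz : Fin (s + 1) → ℕ) 0 r ↔ r < k := by
  rw [InBlock, psum_cons_succ]
  simp [psum_zero]

theorem inBlock_cons_succ (i : Fin s) (r : ℕ) :
    InBlock (Fin.cons k sz : Fin (s + 1) → ℕ) i.succ r ↔ k ≤ r ∧ InBlock sz i (r - k) := by
  rw [InBlock, InBlock, Fin.val_succ, psum_cons_succ, psum_cons_succ]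
  lia

end psum

theorem StrengthenedSchurForm.cons {k m s : ℕ} {sz : Fin s → ℕ} {lam : Fin s → ℝ}
    {F : Matrix (Fin m) (Fin m) ℍ[ℝ]} (hF : StrengthenedSchurForm s sz lam F) {μ : ℝ}
    {R : Matrix (Fin k) (Fin m) ℍ[ℝ]} (hk : 0 < k) (hμ : ∀ i, lam i ≤ μ)
    (hR : ∀ h : 0 < s, μ = lam ⟨0, h⟩ → sz ⟨0, h⟩ ≤ k ∧
      ∀ (r : Fin k) (c : Fin m), (c : ℕ) < sz ⟨0, h⟩ → ((c : ℕ) < r → R r c = 0) ∧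
        ((c : ℕ) = r → ∃ b : ℝ, 0 < b ∧ R r c = (b : ℍ[ℝ]))) :
    StrengthenedSchurForm (s + 1) (Fin.cons k sz) (Fin.cons μ lam)
      (finBlocks (μ • 1) R 0 F) := by
  obtain ⟨hpos, hsum, hanti, hlow, hdiag, hsup⟩ := hF
  refine ⟨Fin.cases hk hpos, by simp [Fin.sum_univ_succ, hsum], ?_, ?_, ?_, ?_⟩
  · intro i j
    refine Fin.cases ?_ (fun i => ?_) i <;> refine Fin.cases ?_ (fun j => ?_) j
    · simp
    · simp [hμ]
    · simp
    · simpa using hanti i j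
  · intro r c i j
    refine Fin.addCases (fun r => ?_) (fun r => ?_) r <;>
      refine Fin.addCases (fun c => ?_) (fun c => ?_) c <;>
      refine Fin.cases ?_ (fun i => ?_) i <;> refine Fin.cases ?_ (fun j => ?_) j <;>
      simp [inBlock_cons_zero, inBlock_cons_succ, -Fin.succ_pos] <;>
      try lia
    exact hlow r c i j
  · intro r c i
    refine Fin.addCases (fun r => ?_) (fun r => ?_) r <;>
      refine Fin.addCases (fun c => ?_) (fun c => ?_) c <;>
      refine Fin.cases ?_ (fun i => ?_) i <;>
      simp [inBlock_cons_zero, inBlock_cons_succ, one_apply, Fin.ext_iff] <;> try lia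
    · rw [← Quaternion.coe_mul_eq_smul, mul_one]
    · simpa [Fin.ext_iff] using hdiag r c i
  · intro i h
    refine Fin.cases (fun h => ?_) (fun i h => ?_) i h
    · have hs : 0 < s := by simpa using h
      rw [show (⟨((0 : Fin (s + 1)) : ℕ) + 1, h⟩ : Fin (s + 1)) = Fin.succ ⟨0, hs⟩ from rfl]
      simp only [Fin.cons_zero, Fin.cons_succ]
      intro heq
      obtain ⟨hle, hR⟩ := hR hs heq
      refine ⟨hle, fun r c hr hc => ?_⟩
      rw [inBlock_cons_zero] at hr
      rw [inBlock_cons_succ] at hc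
      obtain ⟨r, rfl⟩ : ∃ r' : Fin k, r = Fin.castAdd m r' := ⟨⟨r, hr⟩, rfl⟩
      obtain ⟨c, rfl⟩ : ∃ c' : Fin m, c = Fin.natAdd k c' :=
        ⟨⟨c - k, by lia⟩, Fin.ext (by simp; lia)⟩
      simp only [Fin.val_natAdd, Nat.add_sub_cancel_left, InBlock, psum_zero, zero_add] at hc
      rw [Fin.val_zero, psum_cons_succ, psum_zero, psum_zero, finBlocks_castAdd_natAdd]
      simpa using hR r c (by simpa [psum, hs] using hc.2.2)
    · have hs : (i : ℕ) + 1 < s := by simpa using h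
      rw [show (⟨(i.succ : ℕ) + 1, h⟩ : Fin (s + 1)) = Fin.succ ⟨i + 1, hs⟩ from rfl]
      simp only [Fin.cons_succ]
      intro heq
      obtain ⟨hle, hF⟩ := hsup i hs heq
      refine ⟨hle, fun r c hr hc => ?_⟩
      rw [inBlock_cons_succ] at hr hc
      obtain ⟨r, rfl⟩ : ∃ r' : Fin m, r = Fin.natAdd k r' :=
        ⟨⟨r - k, by lia⟩, Fin.ext (by simp; lia)⟩
      obtain ⟨c, rfl⟩ : ∃ c' : Fin m, c = Fin.natAdd k c' :=
        ⟨⟨c - k, by lia⟩, Fin.ext (by simp; lia)⟩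
      simp only [Fin.val_natAdd, Nat.add_sub_cancel_left] at hr hc
      rw [Fin.val_succ, psum_cons_succ, psum_cons_succ, finBlocks_natAdd_natAdd, Fin.val_natAdd,
        Fin.val_natAdd, Nat.add_sub_add_left, Nat.add_sub_add_left]
      exact hF r c hr.2 hc.2

theorem HasRealSpectrum.exists_schurForm (n : ℕ) : ∀ A : Matrix (Fin n) (Fin n) ℍ[ℝ],
    HasRealSpectrum A →
    ∃ (s : ℕ) (sz : Fin s → ℕ) (lam : Fin s → ℝ), ∃ U ∈ unitary (Matrix (Fin n) (Fin n) ℍ[ℝ]),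
      StrengthenedSchurForm s sz lam (Uᴴ * A * U) ∧
      ∀ (h : 0 < s) (r c : Fin n), (c : ℕ) < sz ⟨0, h⟩ →
        (Uᴴ * A * U) r c = (lam ⟨0, h⟩ • (1 : Matrix (Fin n) (Fin n) ℍ[ℝ])) r c := by
  induction n using Nat.strong_induction_on with
  | _ n ih =>
  intro A hA
  rcases n.eq_zero_or_pos with rfl | hn
  · exact ⟨0, Fin.elim0, Fin.elim0, 1, one_mem _,
      ⟨fun i => i.elim0, rfl, fun i => i.elim0, fun r => r.elim0, fun r => r.elim0,
        fun i => i.elim0⟩, fun h => absurd h (lt_irrefl 0)⟩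
  have : NeZero n := ⟨hn.ne'⟩
  obtain ⟨μ, ⟨v, hv, hev⟩, hmax⟩ := hA.exists_max
  obtain ⟨U, hU, k, hkn, hz, hinj⟩ := exists_unitary_mul_nullSpace (A - μ • 1)
  have hUU := Unitary.mem_iff.1 hU
  rw [star_eq_conjTranspose] at hUU
  have hk : 0 < k := by
    by_contra hk
    have h0 : (A - μ • 1) *ᵥ v = 0 := by
      rw [sub_mulVec, hev, smul_mulVec, one_mulVec, sub_eq_zero]
      ext1 i
      rw [Pi.smul_apply, ← Quaternion.coe_mul_eq_smul, Quaternion.coe_commutes]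
    exact hv (eq_zero_of_unitary_mulVec (Unitary.star_mem hU)
      (hinj (Uᴴ *ᵥ v) (fun j hj => by lia)
        (by rw [mulVec_mulVec, Matrix.mul_assoc, hUU.2, Matrix.mul_one, h0])))
  obtain ⟨m, rfl⟩ := Nat.exists_eq_add_of_le hkn
  set A₁ := Uᴴ * A * U with hA₁
  have hN : A₁ = Uᴴ * ((A - μ • 1) * U) + μ • 1 := by
    rw [Matrix.sub_mul, Matrix.mul_sub, smul_mul_assoc, Matrix.one_mul, mul_smul_comm, hUU.1,
      sub_add_cancel, hA₁, Matrix.mul_assoc]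
  let B : Matrix (Fin k) (Fin m) ℍ[ℝ] := A₁.submatrix (Fin.castAdd m) (Fin.natAdd k)
  let D : Matrix (Fin m) (Fin m) ℍ[ℝ] := A₁.submatrix (Fin.natAdd k) (Fin.natAdd k)
  have hcol (i) (j : Fin k) : A₁ i (Fin.castAdd m j) =
      (μ • (1 : Matrix (Fin (k + m)) (Fin (k + m)) ℍ[ℝ])) i (Fin.castAdd m j) := by
    rw [hN, Matrix.add_apply, add_eq_right, mul_apply]
    exact Finset.sum_eq_zero fun l _ => by rw [hz l _ (by simp), mul_zero]
  have hblocks : A₁ = finBlocks (μ • 1) B 0 D := by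
    ext1 i j
    refine Fin.addCases (fun j => ?_) (fun j => ?_) j
    · rw [hcol]
      refine Fin.addCases (fun i => ?_) (fun i => ?_) i
      · simp [one_apply]
      · have : Fin.natAdd k i ≠ Fin.castAdd m j := by simp [Fin.ext_iff]; lia
        simp [one_apply, this]
    · refine Fin.addCases (fun i => ?_) (fun i => ?_) i <;> simp [B, D]
  have hspec (lam : ℍ[ℝ]) (h : IsRightEigenvalue D lam) :
      lam = μ ∨ IsRightEigenvalue A lam := by
    refine or_iff_not_imp_left.2 fun hne => IsRightEigenvalue.of_unitary_conj hU ?_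
    rw [← hA₁, hblocks]
    exact h.of_finBlocks hne
  have hD : HasRealSpectrum D := fun lam h => (hspec lam h).elim (fun h => ⟨μ, h⟩) (hA lam)
  have hDinj (y : Fin m → ℍ[ℝ]) (hB : B *ᵥ y = 0) (hDy : D *ᵥ y = μ • y) : y = 0 := by
    have h0 : ((A - μ • 1) * U) *ᵥ Fin.append 0 y = 0 := by
      refine eq_zero_of_unitary_mulVec (Unitary.star_mem hU) ?_
      rw [star_eq_conjTranspose, mulVec_mulVec, ← sub_eq_of_eq_add hN, hblocks, sub_mulVec,
        finBlocks_mulVec_append, hB, hDy]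
      ext1 i
      refine Fin.addCases (fun i => ?_) (fun i => ?_) i <;> simp [smul_mulVec]
    have := hinj _ (fun j hj => ?_) h0
    · ext1 i
      simpa using congrFun this (Fin.natAdd k i)
    · obtain ⟨j, rfl⟩ : ∃ j' : Fin k, j = Fin.castAdd m j' := ⟨⟨j, hj⟩, rfl⟩
      simp
  obtain ⟨s, sz, lam, V, hV, hform, hfirst⟩ := ih m (by lia) D hD
  have hVV := Unitary.mem_iff.1 hV
  rw [star_eq_conjTranspose] at hVV
  obtain ⟨Q, hQ, hlow, hdiag⟩ := exists_unitary_mul_upperTriangular (B * V)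
  have hQQ := Unitary.mem_iff.1 hQ
  rw [star_eq_conjTranspose] at hQQ
  have hμ (i : Fin s) : lam i ≤ μ := by
    have hs : 0 < s := i.pos
    refine (hform.2.2.1 ⟨0, hs⟩ i (Fin.le_def.2 (Nat.zero_le _))).trans ?_
    have hm : 0 < m := by
      rw [← hform.2.1]
      exact (hform.1 i).trans_le (Finset.single_le_sum (fun _ _ => Nat.zero_le _)
        (Finset.mem_univ i))
    have hev : IsRightEigenvalue (Vᴴ * D * V) (lam ⟨0, hs⟩ : ℍ[ℝ]) := by
      refine ⟨Pi.single ⟨0, hm⟩ 1, by simp, ?_⟩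
      ext1 r
      rw [mulVec_single_one, col_apply, hfirst hs r ⟨0, hm⟩ (hform.1 _), Matrix.smul_apply,
        one_apply, Pi.single_apply]
      split_ifs <;> simp [← Quaternion.coe_mul_eq_smul]
    rcases hspec _ (hev.of_unitary_conj hV) with h | h
    · exact (Quaternion.coe_injective h).le
    · exact hmax _ h
  have hRinj (v : Fin m → ℍ[ℝ]) (hR : (Q * (B * V)) *ᵥ v = 0)
      (hG : (Vᴴ * D * V - μ • 1) *ᵥ v = 0) : v = 0 := by
    refine eq_zero_of_unitary_mulVec hV (hDinj _ ?_ ?_)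
    · exact eq_zero_of_unitary_mulVec hQ (by rw [mulVec_mulVec, mulVec_mulVec, Matrix.mul_assoc, hR])
    · rw [sub_mulVec, sub_eq_zero, smul_mulVec, one_mulVec] at hG
      rw [← mulVec_smul, ← hG, mulVec_mulVec, mulVec_mulVec, ← Matrix.mul_assoc,
        ← Matrix.mul_assoc, hVV.2, Matrix.one_mul]
  have hW := finBlocks_mem_unitary (Unitary.star_mem hQ) hV
  have hfinal : (U * finBlocks (star Q) 0 0 V)ᴴ * A * (U * finBlocks (star Q) 0 0 V) =
      finBlocks (μ • 1) (Q * (B * V)) 0 (Vᴴ * D * V) := by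
    rw [conjTranspose_mul]
    calc _ = (finBlocks (star Q) 0 0 V)ᴴ * A₁ * finBlocks (star Q) 0 0 V := by
          simp only [hA₁, Matrix.mul_assoc]
      _ = _ := by
          rw [hblocks, conjTranspose_finBlocks, finBlocks_mul, finBlocks_mul]
          simp [star_eq_conjTranspose, hQQ.2, Matrix.mul_assoc]
  refine ⟨s + 1, Fin.cons k sz, Fin.cons μ lam, U * finBlocks (star Q) 0 0 V, mul_mem hU hW, ?_, ?_⟩
  · rw [hfinal]
    refine hform.cons hk hμ fun hs heq => ?_
    have hne := diag_ne_zero_of_injective hlow (G := Vᴴ * D * V - μ • 1) (d := sz ⟨0, hs⟩)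
      (fun r c hc => by rw [Matrix.sub_apply, hfirst hs r c hc, heq, sub_self]) hRinj
    refine ⟨?_, fun r c hc => ⟨hlow r c, fun hcr => ?_⟩⟩
    · have hpos := hform.1 ⟨0, hs⟩
      have hle : sz ⟨0, hs⟩ ≤ m := by
        rw [← hform.2.1]
        exact Finset.single_le_sum (fun _ _ => Nat.zero_le _) (Finset.mem_univ _)
      have := (hne ⟨sz ⟨0, hs⟩ - 1, by lia⟩ (by simp; lia)).1
      simp only at this
      lia
    · obtain ⟨b, hb, hbe⟩ := hdiag r c hcr
      obtain ⟨hck, hne⟩ := hne c hc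
      refine ⟨b, lt_of_le_of_ne hb fun h0 => hne ?_, hbe⟩
      rw [show (⟨c, hck⟩ : Fin k) = r from Fin.ext hcr, hbe, ← h0, Quaternion.coe_zero]
  · intro h r c hc
    obtain ⟨c, rfl⟩ : ∃ c' : Fin k, c = Fin.castAdd m c' := ⟨⟨c, hc⟩, rfl⟩
    rw [hfinal]
    refine Fin.addCases (fun r => ?_) (fun r => ?_) r
    · rw [finBlocks_castAdd_castAdd]
      change (μ • (1 : Matrix _ _ ℍ[ℝ])) _ _ = (μ • (1 : Matrix _ _ ℍ[ℝ])) _ _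
      simp [one_apply]
    · have : Fin.natAdd k r ≠ Fin.castAdd m c := by simp [Fin.ext_iff]; lia
      simp [one_apply, this]

/-- **Strengthened Schur theorem for quaternion matrices with real spectrum (existence).**
If all right eigenvalues of `A` are real, then `A` is unitarily similar to a matrix in
strengthened Schur form. -/
theorem strengthened_schur_existence {n : ℕ} (A : Matrix (Fin n) (Fin n) ℍ[ℝ])
    (hA : HasRealSpectrum A) :
    ∃ (s : ℕ) (sz : Fin s → ℕ) (lam : Fin s → ℝ) (U : Matrix (Fin n) (Fin n) ℍ[ℝ]),
      IsUnitaryM U ∧ StrengthenedSchurForm s sz lam (Uᴴ * A * U) := by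
  obtain ⟨s, sz, lam, U, hU, hF, -⟩ := hA.exists_schurForm n A
  exact ⟨s, sz, lam, U, (Unitary.mem_iff.1 hU).1, hF⟩
end
end

section
/- Let A be an n×n quaternion matrix all of whose right eigenvalues are real, and suppose F and F′ are each unitarily similar to A and each has the form: block upper triangular with respect to partitions (n₁,…,n_s) and (n₁′,…,n_{s′}′) respectively, with diagonal blocks λ_i·I_{n_i} (resp. λ_i′·I_{n_i′}) for real numbers λ₁ ≥ ⋯ ≥ λ_s (resp. λ₁′ ≥ ⋯ ≥ λ_{s′}′), such that whenever two consecutive scalars are equal the corresponding block sizes are nonincreasing and the corresponding superdiagonal block is upper triangular with positive real diagonal entries. Then s = s′, and λ_i = λ_i′ and n_i = n_i′ for all i; i.e., the diagonal blocks λ_i·I_{n_i} are uniquely determined by A. -/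
open Matrix
open scoped Quaternion

noncomputable section

section

variable {n s s' : ℕ} {sz : Fin s → ℕ} {sz' : Fin s' → ℕ} {lam : Fin s → ℝ} {lam' : Fin s' → ℝ}
  {F F' : Matrix (Fin n) (Fin n) ℍ[ℝ]}

theorem psum_succ {k : ℕ} (h : k < s) : psum sz (k + 1) = psum sz k + sz ⟨k, h⟩ := by
  simp [psum, Finset.sum_range_succ, h]

theorem psum_mono : Monotone (psum sz) := fun _ _ h =>
  Finset.sum_le_sum_of_subset (Finset.range_mono h)

theorem psum_full : psum sz s = ∑ i, sz i := by
  simp [psum, Finset.sum_range]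

theorem exists_inBlock {r : ℕ} (h : r < psum sz s) : ∃ i : Fin s, InBlock sz i r := by
  have key : ∀ k ≤ s, r < psum sz k → ∃ i : Fin s, InBlock sz i r := by
    intro k
    induction k with
    | zero => simp [psum]
    | succ k ih =>
      intro hk hr
      by_cases hr' : r < psum sz k
      · exact ih (by omega) hr'
      · exact ⟨⟨k, hk⟩, not_lt.mp hr', hr⟩
  exact key s le_rfl h

/-- The vectors supported on the first `m` coordinates, as a real subspace. -/
def firstCoords (n m : ℕ) : Submodule ℝ (Fin n → ℍ[ℝ]) where
  carrier := {v | ∀ r : Fin n, m ≤ r → v r = 0}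
  add_mem' ha hb r hr := by simp [ha r hr, hb r hr]
  zero_mem' _ _ := rfl
  smul_mem' a v hv r hr := by simp [hv r hr]

theorem mem_firstCoords {m : ℕ} {v : Fin n → ℍ[ℝ]} :
    v ∈ firstCoords n m ↔ ∀ r : Fin n, m ≤ r → v r = 0 := Iff.rfl

theorem firstCoords_lt {m m' : ℕ} (h : m < m') (hn : m' ≤ n) :
    firstCoords n m < firstCoords n m' := by
  refine SetLike.lt_iff_le_and_exists.mpr
    ⟨fun v hv r hr => hv r (h.le.trans hr), Pi.single ⟨m, by omega⟩ 1, fun r hr => ?_, fun hv => ?_⟩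
  · exact Pi.single_eq_of_ne (Fin.ne_of_gt (show m < (r : ℕ) by omega)) _
  · simpa using hv ⟨m, by omega⟩ le_rfl

theorem exists_last_of_notMem_firstCoords {m : ℕ} {v : Fin n → ℍ[ℝ]} (hv : v ∉ firstCoords n m) :
    ∃ c : Fin n, m ≤ c ∧ v c ≠ 0 ∧ ∀ d, c < d → v d = 0 := by
  simp only [mem_firstCoords, not_forall] at hv
  obtain ⟨r, hr, hvr⟩ := hv
  classical
  obtain ⟨c, hc, hmax⟩ := (Finset.univ.filter (v · ≠ 0)).exists_max_image id ⟨r, by simpa using hvr⟩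
  refine ⟨c, ?_, by simpa using hc, fun d hd => ?_⟩
  · exact hr.trans (hmax r (by simpa using hvr))
  · by_contra hvd
    exact absurd (hmax d (by simpa using hvd)) (not_le.mpr hd)

theorem mulVec_apply_of_last {v : Fin n → ℍ[ℝ]} {c r : Fin n} (hv : ∀ d, c < d → v d = 0)
    (hF : ∀ d, d < c → F r d = 0) : (F *ᵥ v) r = F r c * v c := by
  refine Finset.sum_eq_single c (fun d _ hd => ?_)
    (fun h => absurd (Finset.mem_univ _) h)
  rcases lt_or_gt_of_ne hd with h | h
  · simp [hF d h]
  · simp [hv d h]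

namespace StrengthenedSchurForm

theorem size_pos (hF : StrengthenedSchurForm s sz lam F) (i : Fin s) : 0 < sz i := hF.1 i

theorem psum_eq (hF : StrengthenedSchurForm s sz lam F) : psum sz s = n := psum_full.trans hF.2.1

theorem antitone (hF : StrengthenedSchurForm s sz lam F) : Antitone lam :=
  fun i j h => hF.2.2.1 i j h

theorem exists_inBlock (hF : StrengthenedSchurForm s sz lam F) (r : Fin n) :
    ∃ i : Fin s, InBlock sz i r :=
  _root_.exists_inBlock (by rw [hF.psum_eq]; exact r.2)

theorem apply_self (hF : StrengthenedSchurForm s sz lam F) {c : Fin n} {j : Fin s}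
    (hc : InBlock sz j c) : F c c = (lam j : ℍ[ℝ]) := by
  simpa using hF.2.2.2.2.1 c c j hc hc

theorem apply_eq_zero (hF : StrengthenedSchurForm s sz lam F) {r d : Fin n} {i j : Fin s}
    (hr : InBlock sz i r) (hd : InBlock sz j d) (hji : j ≤ i) (hrd : r ≠ d) : F r d = 0 := by
  rcases hji.lt_or_eq with h | rfl
  · exact hF.2.2.2.1 r d i j hr hd h
  · simpa [hrd] using hF.2.2.2.2.1 r d j hr hd

end StrengthenedSchurForm

theorem InBlock.le_of_le {i j : Fin s} {r c : ℕ} (hr : InBlock sz i r) (hc : InBlock sz j c)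
    (h : r ≤ c) : i ≤ j := by
  by_contra! hij
  have := psum_mono (sz := sz) (show (j : ℕ) + 1 ≤ i from hij)
  have := hr.1
  have := hc.2
  omega

theorem InBlock.le_of_psum_le {j : Fin s} {c k : ℕ} (hc : InBlock sz j c) (h : psum sz k ≤ c) :
    k ≤ j := by
  by_contra! hjk
  have := psum_mono (sz := sz) (show (j : ℕ) + 1 ≤ k from hjk)
  have := hc.2
  omega

namespace StrengthenedSchurForm

theorem lam_eq_of_last (hF : StrengthenedSchurForm s sz lam F) {v : Fin n → ℍ[ℝ]} {c : Fin n}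
    {j : Fin s} {μ : ℝ} (hc : InBlock sz j c) (hvc : v c ≠ 0) (hv : ∀ d, c < d → v d = 0)
    (h : (F *ᵥ v - μ • v) c = 0) : lam j = μ := by
  have hrow : (F *ᵥ v) c = F c c * v c := mulVec_apply_of_last hv fun d hd => by
    obtain ⟨i, hi⟩ := hF.exists_inBlock d
    exact hF.apply_eq_zero hc hi (hi.le_of_le hc hd.le) hd.ne'
  rw [Pi.sub_apply, hrow, hF.apply_self hc, Pi.smul_apply, ← Quaternion.coe_mul_eq_smul, ← sub_mul,
    mul_eq_zero, or_iff_left hvc, sub_eq_zero] at h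
  exact Quaternion.coe_injective h

/-- Applying `F - μ` cannot move a vector into the first `k` blocks when `μ` exceeds the remaining
diagonal scalars. -/
theorem mem_firstCoords_of_lt (hF : StrengthenedSchurForm s sz lam F) {v : Fin n → ℍ[ℝ]} {k : ℕ}
    {μ : ℝ} (hk : k < s) (hμ : lam ⟨k, hk⟩ < μ)
    (h : F *ᵥ v - μ • v ∈ firstCoords n (psum sz k)) : v ∈ firstCoords n (psum sz k) := by
  by_contra hv
  obtain ⟨c, hkc, hvc, hlast⟩ := exists_last_of_notMem_firstCoords hv
  obtain ⟨j, hj⟩ := hF.exists_inBlock c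
  have h1 := hF.lam_eq_of_last hj hvc hlast (h c hkc)
  have h2 := hF.antitone (show (⟨k, hk⟩ : Fin s) ≤ j from hj.le_of_psum_le hkc)
  linarith

theorem mem_firstCoords_succ_iff (hF : StrengthenedSchurForm s sz lam F) {v : Fin n → ℍ[ℝ]} {k : ℕ}
    (hk : k < s) :
    F *ᵥ v - lam ⟨k, hk⟩ • v ∈ firstCoords n (psum sz k) ↔
      v ∈ firstCoords n (psum sz (k + 1)) := by
  constructor
  · intro h
    by_contra hv
    obtain ⟨c, hkc, hvc, hlast⟩ := exists_last_of_notMem_firstCoords hv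
    obtain ⟨⟨j, hjs⟩, hj⟩ := hF.exists_inBlock c
    have hkj : k + 1 ≤ j := hj.le_of_psum_le hkc
    obtain ⟨i, rfl⟩ : ∃ i, j = i + 1 := ⟨j - 1, by omega⟩
    have hlam := hF.lam_eq_of_last hj hvc hlast
      (h c ((psum_mono (Nat.le_succ k)).trans hkc))
    have hi : i < s := by omega
    have h1 : lam ⟨i + 1, hjs⟩ ≤ lam ⟨i, hi⟩ := hF.antitone (Fin.mk_le_mk.mpr (Nat.le_succ i))
    have h2 : lam ⟨i, hi⟩ ≤ lam ⟨k, hk⟩ := hF.antitone (Fin.mk_le_mk.mpr (by omega))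
    have hlam_i : lam ⟨i, hi⟩ = lam ⟨i + 1, hjs⟩ := by linarith
    obtain ⟨hsz, hblock⟩ := hF.2.2.2.2.2 ⟨i, hi⟩ hjs hlam_i
    have hc1 : psum sz (i + 1) ≤ c := hj.1
    have hc2 : (c : ℕ) < psum sz (i + 1 + 1) := hj.2
    rw [psum_succ hjs] at hc2
    have hp := psum_succ (sz := sz) hi
    dsimp only at hsz hblock
    have hrc : psum sz i + (c - psum sz (i + 1)) < c := by
      have := hF.size_pos ⟨i, hi⟩
      omega
    let r : Fin n := ⟨psum sz i + (c - psum sz (i + 1)), hrc.trans c.2⟩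
    have hr : InBlock sz ⟨i, hi⟩ r := by
      constructor <;> dsimp only [r] <;> omega
    obtain ⟨b, hb, hFb⟩ := (hblock r c hr hj).2 (by dsimp only [r]; omega)
    have hrow : ((F - lam ⟨k, hk⟩ • (1 : Matrix (Fin n) (Fin n) ℍ[ℝ])) *ᵥ v) r =
        (F - lam ⟨k, hk⟩ • (1 : Matrix (Fin n) (Fin n) ℍ[ℝ])) r c * v c := by
      refine mulVec_apply_of_last hlast fun d hd => ?_
      obtain ⟨⟨l, hl⟩, hdl⟩ := hF.exists_inBlock d
      have hli : l ≤ i + 1 := hdl.le_of_le hj hd.le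
      by_cases hrd : r = d
      · subst hrd
        have : lam ⟨i, hi⟩ = lam ⟨k, hk⟩ := by linarith
        simp [hF.apply_self hr, this, ← Quaternion.coe_mul_eq_smul]
      · have : F r d = 0 := by
          rcases hli.lt_or_eq with h' | rfl
          · exact hF.apply_eq_zero hr hdl (Fin.mk_le_mk.mpr (by omega)) hrd
          · refine (hblock r d hr hdl).1 ?_
            have hd1 : psum sz (i + 1) ≤ d := hdl.1
            have hdc : (d : ℕ) < c := hd
            dsimp only [r]
            omega
        simp [this, hrd]
    have hrc' : r ≠ c := Fin.ne_of_lt hrc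
    have hzero := h r ((psum_mono (show k ≤ i by omega)).trans hr.1)
    rw [Matrix.sub_mulVec, Matrix.smul_mulVec, Matrix.one_mulVec, hzero] at hrow
    simp [hrc', hFb, hvc] at hrow
    exact hb.ne' (Quaternion.coe_injective hrow)
  · intro hv r hr
    obtain ⟨i, hi⟩ := hF.exists_inBlock r
    have hki : k ≤ i := hi.le_of_psum_le hr
    have hrow : (F *ᵥ v) r = F r r * v r := by
      refine Finset.sum_eq_single r (fun d _ hd => ?_)
        (fun h => absurd (Finset.mem_univ _) h)
      by_cases hdk : psum sz (k + 1) ≤ d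
      · simp [hv d hdk]
      · obtain ⟨j, hj⟩ := hF.exists_inBlock d
        have hji : j ≤ i := by
          by_contra! hij
          have := psum_mono (sz := sz) (show k + 1 ≤ j from Nat.lt_of_le_of_lt hki hij)
          have := hj.1
          omega
        simp [hF.apply_eq_zero hi hj hji hd.symm]
    rw [Pi.sub_apply, hrow, Pi.smul_apply]
    by_cases hrk : psum sz (k + 1) ≤ r
    · simp [hv r hrk]
    · have hik : i = ⟨k, hk⟩ := by
        refine Fin.ext (le_antisymm ?_ hki)
        by_contra! hlt
        have := psum_mono (sz := sz) (show k + 1 ≤ i from hlt)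
        have := hi.1
        omega
      rw [hF.apply_self hi, hik, Quaternion.coe_mul_eq_smul, sub_self]

/-- If `F` and `F'` are intertwined and the intertwiner matches the spans of the first `k` blocks,
then the next scalar of `F'` is at most the next scalar of `F`. -/
theorem lam_le_of_intertwine (hF : StrengthenedSchurForm s sz lam F)
    (hF' : StrengthenedSchurForm s' sz' lam' F') {P : Matrix (Fin n) (Fin n) ℍ[ℝ]}
    (hP : F * P = P * F') {k : ℕ} (hk : k < s) (hk' : k < s')
    (hV : ∀ v, P *ᵥ v ∈ firstCoords n (psum sz k) ↔ v ∈ firstCoords n (psum sz' k)) :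
    lam' ⟨k, hk'⟩ ≤ lam ⟨k, hk⟩ := by
  by_contra! hlt
  have hle : psum sz' (k + 1) ≤ n := by
    rw [← hF'.psum_eq]
    exact psum_mono hk'
  have hsucc := psum_succ (sz := sz') hk'
  have hpos := hF'.size_pos ⟨k, hk'⟩
  obtain ⟨-, v, hv, hv'⟩ := SetLike.lt_iff_le_and_exists.mp
    (firstCoords_lt (n := n) (show psum sz' k < psum sz' (k + 1) by omega) hle)
  refine hv' ((hV v).1 (hF.mem_firstCoords_of_lt hk hlt ?_))
  rw [Matrix.mulVec_mulVec, hP, ← Matrix.mulVec_mulVec, ← Matrix.mulVec_smul, ← Matrix.mulVec_sub, hV]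
  exact (hF'.mem_firstCoords_succ_iff hk').2 hv

end StrengthenedSchurForm

/-- An invertible matrix carrying the first `m'` coordinates onto the first `m` forces
`m' ≤ m`. -/
theorem le_of_mulVec_mem_firstCoords {P Q : Matrix (Fin n) (Fin n) ℍ[ℝ]} (hQP : Q * P = 1)
    {m m' : ℕ} (hm' : m' ≤ n)
    (h : ∀ v ∈ firstCoords n m', P *ᵥ v ∈ firstCoords n m) : m' ≤ m := by
  by_contra! hlt
  let f : (Fin n → ℍ[ℝ]) →ₗ[ℝ] (Fin n → ℍ[ℝ]) :=
    { toFun := fun v => P *ᵥ v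
      map_add' := Matrix.mulVec_add P
      map_smul' := Matrix.mulVec_smul P }
  have hf : Function.Injective f := fun v w hvw => by
    have := congrArg (Q *ᵥ ·) (show P *ᵥ v = P *ᵥ w from hvw)
    simpa [Matrix.mulVec_mulVec, hQP] using this
  have h1 := Submodule.finrank_mono (show (firstCoords n m').map f ≤ firstCoords n m from
    Submodule.map_le_iff_le_comap.mpr h)
  rw [← (Submodule.equivMapOfInjective f hf (firstCoords n m')).finrank_eq] at h1
  exact absurd (Submodule.finrank_lt_finrank_of_lt (firstCoords_lt hlt hm')) (not_lt.mpr h1)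

theorem psum_eq_of_forall_eq {k : ℕ} (hk : k ≤ s) (hk' : k ≤ s')
    (h : ∀ i (hi : i < k), sz ⟨i, by omega⟩ = sz' ⟨i, by omega⟩) : psum sz k = psum sz' k := by
  refine Finset.sum_congr rfl fun i hi => ?_
  have hi := Finset.mem_range.mp hi
  rw [dif_pos (by omega), dif_pos (by omega), h i hi]

namespace StrengthenedSchurForm

theorem blocks_eq_of_intertwine (hF : StrengthenedSchurForm s sz lam F)
    (hF' : StrengthenedSchurForm s' sz' lam' F') {P Q : Matrix (Fin n) (Fin n) ℍ[ℝ]}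
    (hPQ : P * Q = 1) (hP : F * P = P * F') (k : ℕ) (hk : k ≤ s) (hk' : k ≤ s') :
    (∀ i (h : i < s) (h' : i < s'), i < k →
      lam ⟨i, h⟩ = lam' ⟨i, h'⟩ ∧ sz ⟨i, h⟩ = sz' ⟨i, h'⟩) ∧
    ∀ v, P *ᵥ v ∈ firstCoords n (psum sz k) ↔ v ∈ firstCoords n (psum sz' k) := by
  have hQP : Q * P = 1 := mul_eq_one_comm.mp hPQ
  have hQ : F' * Q = Q * F := by
    calc F' * Q = Q * P * F' * Q := by rw [hQP, one_mul]
      _ = Q * (P * F') * Q := by rw [mul_assoc Q]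
      _ = Q * F * (P * Q) := by rw [← hP]; simp only [mul_assoc]
      _ = Q * F := by rw [hPQ, mul_one]
  induction k with
  | zero =>
    refine ⟨fun i _ _ hi => absurd hi (Nat.not_lt_zero i), fun v => ?_⟩
    have hbot : ∀ v : Fin n → ℍ[ℝ], v ∈ firstCoords n 0 ↔ v = 0 := fun v => by
      simp [mem_firstCoords, funext_iff]
    simp only [psum, Finset.range_zero, Finset.sum_empty, hbot]
    refine ⟨fun h => ?_, fun h => by simp [h]⟩
    have := congrArg (Q *ᵥ ·) h
    simpa [Matrix.mulVec_mulVec, hQP] using this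
  | succ k ih =>
    obtain ⟨ihB, ihV⟩ := ih (by omega) (by omega)
    have ihV' : ∀ v, Q *ᵥ v ∈ firstCoords n (psum sz' k) ↔ v ∈ firstCoords n (psum sz k) :=
      fun v => by rw [← ihV, Matrix.mulVec_mulVec, hPQ, Matrix.one_mulVec]
    have hlam : lam ⟨k, hk⟩ = lam' ⟨k, hk'⟩ :=
      le_antisymm (hF'.lam_le_of_intertwine hF hQ hk' hk ihV')
        (hF.lam_le_of_intertwine hF' hP hk hk' ihV)
    have hV : ∀ v, P *ᵥ v ∈ firstCoords n (psum sz (k + 1)) ↔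
        v ∈ firstCoords n (psum sz' (k + 1)) := fun v => by
      rw [← hF.mem_firstCoords_succ_iff hk, ← hF'.mem_firstCoords_succ_iff hk', hlam,
        Matrix.mulVec_mulVec, hP, ← Matrix.mulVec_mulVec, ← Matrix.mulVec_smul,
        ← Matrix.mulVec_sub, ihV]
    have hle : psum sz (k + 1) ≤ n := hF.psum_eq ▸ psum_mono hk
    have hle' : psum sz' (k + 1) ≤ n := hF'.psum_eq ▸ psum_mono hk'
    have hsum : psum sz (k + 1) = psum sz' (k + 1) :=
      le_antisymm
        (le_of_mulVec_mem_firstCoords hPQ hle fun v hv =>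
          (hV _).1 (by rwa [Matrix.mulVec_mulVec, hPQ, Matrix.one_mulVec]))
        (le_of_mulVec_mem_firstCoords hQP hle' fun v hv => (hV v).2 hv)
    have hprev : psum sz k = psum sz' k :=
      psum_eq_of_forall_eq (by omega) (by omega) fun i hi => (ihB i _ _ hi).2
    have hsz : sz ⟨k, hk⟩ = sz' ⟨k, hk'⟩ := by
      rw [psum_succ hk, psum_succ hk'] at hsum
      omega
    refine ⟨fun i h h' hi => ?_, hV⟩
    rcases Nat.lt_succ_iff_lt_or_eq.mp hi with hi | rfl
    · exact ihB i h h' hi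
    · exact ⟨hlam, hsz⟩

theorem length_le (hF : StrengthenedSchurForm s sz lam F)
    (hF' : StrengthenedSchurForm s' sz' lam' F')
    (h : ∀ i (h : i < s) (h' : i < s'), sz ⟨i, h⟩ = sz' ⟨i, h'⟩) : s' ≤ s := by
  by_contra! hlt
  have h1 : psum sz s = psum sz' s := psum_eq_of_forall_eq le_rfl hlt.le fun i hi => h i _ _
  have h2 := psum_succ (sz := sz') hlt
  have h3 := psum_mono (sz := sz') (Nat.succ_le_of_lt hlt)
  have h4 := hF'.size_pos ⟨s, hlt⟩
  have h5 := hF.psum_eq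
  have h6 := hF'.psum_eq
  simp only [Nat.succ_eq_add_one] at h3
  omega

end StrengthenedSchurForm

theorem UnitarilySimilar.exists_intertwine {A : Matrix (Fin n) (Fin n) ℍ[ℝ]}
    (h : UnitarilySimilar F A) (h' : UnitarilySimilar F' A) :
    ∃ P Q : Matrix (Fin n) (Fin n) ℍ[ℝ], P * Q = 1 ∧ F * P = P * F' := by
  obtain ⟨U, hU, rfl⟩ := h
  obtain ⟨W, hW, rfl⟩ := h'
  have hU' : U * Uᴴ = 1 := mul_eq_one_comm.mp hU
  have hW' : W * Wᴴ = 1 := mul_eq_one_comm.mp hW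
  refine ⟨Uᴴ * W, Wᴴ * U, ?_, ?_⟩
  · rw [mul_assoc, ← mul_assoc W, hW', one_mul, hU]
  · calc Uᴴ * A * U * (Uᴴ * W) = Uᴴ * A * (U * Uᴴ) * W := by simp only [mul_assoc]
      _ = Uᴴ * (W * Wᴴ) * A * W := by rw [hU', hW', mul_one, mul_one]
      _ = Uᴴ * W * (Wᴴ * A * W) := by simp only [mul_assoc]

end

/-- **Uniqueness of the diagonal blocks in the strengthened Schur form.**
If `F` and `F'` are both unitarily similar to a matrix `A` with real spectrum and both are in
strengthened Schur form, then the numbers of blocks agree and the scalars and block sizes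
agree; i.e., the diagonal blocks `λ_i • I_{n_i}` are uniquely determined by `A`. -/
theorem strengthened_schur_uniqueness {n : ℕ} (A : Matrix (Fin n) (Fin n) ℍ[ℝ])
    (hA : HasRealSpectrum A)
    {s s' : ℕ} {sz : Fin s → ℕ} {sz' : Fin s' → ℕ} {lam : Fin s → ℝ} {lam' : Fin s' → ℝ}
    {F F' : Matrix (Fin n) (Fin n) ℍ[ℝ]}
    (hFA : UnitarilySimilar F A) (hF : StrengthenedSchurForm s sz lam F)
    (hFA' : UnitarilySimilar F' A) (hF' : StrengthenedSchurForm s' sz' lam' F') :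
    s = s' ∧ ∀ (i : ℕ) (h : i < s) (h' : i < s'),
      lam ⟨i, h⟩ = lam' ⟨i, h'⟩ ∧ sz ⟨i, h⟩ = sz' ⟨i, h'⟩ := by
  obtain ⟨P, Q, hPQ, hP⟩ := hFA.exists_intertwine hFA'
  have h := (hF.blocks_eq_of_intertwine hF' hPQ hP (min s s') (min_le_left _ _)
    (min_le_right _ _)).1
  have h' : ∀ (i : ℕ) (h : i < s) (h' : i < s'),
      lam ⟨i, h⟩ = lam' ⟨i, h'⟩ ∧ sz ⟨i, h⟩ = sz' ⟨i, h'⟩ :=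
    fun i hi hi' => h i hi hi' (lt_min hi hi')
  exact ⟨le_antisymm (hF'.length_le hF fun i hi hi' => (h' i hi' hi).2.symm)
    (hF.length_le hF' fun i hi hi' => (h' i hi hi').2), h'⟩
end
end

section
/- Let A be an n×n quaternion matrix with A² = A. Then A is unitarily similar to a direct sum of matrices, each of which is one of: the 2×2 matrix [[1, b],[0, 0]] with b a positive real number, the 1×1 matrix [1], or the 1×1 matrix [0]; moreover this direct sum is uniquely determined by A up to permutation of the summands. -/
open Matrix
open scoped Quaternion

noncomputable section

/-- The direct sum of `p` blocks `[[1, b t],[0, 0]]`, `q` blocks `[1]`, and `r` blocks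
`[0]`. -/
def projCanon (p q r : ℕ) (b : Fin p → ℝ) :
    Matrix ((Fin 2 × Fin p) ⊕ (Fin q ⊕ Fin r)) ((Fin 2 × Fin p) ⊕ (Fin q ⊕ Fin r)) ℍ[ℝ] :=
  Matrix.fromBlocks (Matrix.blockDiagonal fun t => !![1, (b t : ℍ[ℝ]); 0, 0]) 0 0
    (Matrix.fromBlocks 1 0 0 0)

section Quaternionic

variable {m ι : Type*} [Fintype m] [Fintype ι]

theorem Quaternion.re_mul_comm (a b : ℍ[ℝ]) : (a * b).re = (b * a).re := by
  simp only [Quaternion.re_mul]; ring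

theorem Quaternion.re_sum (f : ι → ℍ[ℝ]) : (∑ i, f i).re = ∑ i, (f i).re :=
  map_sum (⟨⟨fun a => a.re, rfl⟩, fun _ _ => rfl⟩ : ℍ[ℝ] →+ ℝ) f Finset.univ

theorem finrank_real_quaternion_pi : Module.finrank ℝ (ι → ℍ[ℝ]) = Fintype.card ι * 4 := by
  simp [Module.finrank_pi_fintype, Quaternion.finrank_eq_four]

theorem star_mulVec_dotProduct (M : Matrix m ι ℍ[ℝ]) (u : ι → ℍ[ℝ]) (w : m → ℍ[ℝ]) :
    star (M *ᵥ u) ⬝ᵥ w = star u ⬝ᵥ (Mᴴ *ᵥ w) := by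
  rw [star_mulVec, dotProduct_mulVec]

theorem star_dotProduct_self_eq_coe (v : m → ℍ[ℝ]) :
    star v ⬝ᵥ v = ((∑ i, Quaternion.normSq (v i) : ℝ) : ℍ[ℝ]) := by
  simp only [dotProduct, Pi.star_apply, Quaternion.star_mul_self]
  exact (map_sum (algebraMap ℝ ℍ[ℝ]) _ _).symm

theorem nonneg_of_star_dotProduct_self_eq {v : m → ℍ[ℝ]} {c : ℝ}
    (h : star v ⬝ᵥ v = (c : ℍ[ℝ])) : 0 ≤ c := by
  rw [star_dotProduct_self_eq_coe, Quaternion.coe_inj] at h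
  exact h ▸ Finset.sum_nonneg fun i _ => Quaternion.normSq_nonneg

theorem eq_zero_of_star_dotProduct_self_eq_zero {v : m → ℍ[ℝ]} (h : star v ⬝ᵥ v = 0) :
    v = 0 := by
  rw [star_dotProduct_self_eq_coe, ← Quaternion.coe_zero, Quaternion.coe_inj,
    Finset.sum_eq_zero_iff_of_nonneg fun i _ => Quaternion.normSq_nonneg] at h
  funext i
  exact Quaternion.normSq_eq_zero.mp (h i (Finset.mem_univ i))

theorem star_smul_dotProduct_smul (a b : ℝ) (v w : m → ℍ[ℝ]) :
    star (a • v) ⬝ᵥ (b • w) = (a * b) • (star v ⬝ᵥ w) := by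
  have h : star (a • v) = a • star v := funext fun i => Quaternion.star_smul a (v i)
  rw [h, smul_dotProduct, dotProduct_smul, smul_smul]

/-- Left multiplication by a quaternion matrix, as a real linear map of Euclidean spaces. -/
def mulVecEuclidean (M : Matrix m ι ℍ[ℝ]) :
    PiLp 2 (fun _ : ι => ℍ[ℝ]) →ₗ[ℝ] PiLp 2 (fun _ : m => ℍ[ℝ]) where
  toFun v := WithLp.toLp 2 (M *ᵥ v.ofLp)
  map_add' v w := by simp [mulVec_add]
  map_smul' c v := by simp [mulVec_smul]

theorem finrank_quaternion_euclidean :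
    Module.finrank ℝ (PiLp 2 (fun _ : ι => ℍ[ℝ])) = Fintype.card ι * 4 := by
  rw [LinearEquiv.finrank_eq (WithLp.linearEquiv 2 ℝ (ι → ℍ[ℝ])), finrank_real_quaternion_pi]

theorem mulVecEuclidean_isSymmetric {H : Matrix m m ℍ[ℝ]} (hH : Hᴴ = H) :
    (mulVecEuclidean H).IsSymmetric := by
  have key : ∀ v w : PiLp 2 (fun _ : m => ℍ[ℝ]), inner ℝ v w = (star w.ofLp ⬝ᵥ v.ofLp).re := by
    intro v w
    simp only [PiLp.inner_apply, Quaternion.inner_def, dotProduct, Pi.star_apply]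
    rw [Quaternion.re_sum]
    exact Finset.sum_congr rfl fun i _ => Quaternion.re_mul_comm _ _
  intro v w
  rw [key, key]
  change (star w.ofLp ⬝ᵥ (H *ᵥ v.ofLp)).re = (star (H *ᵥ w.ofLp) ⬝ᵥ v.ofLp).re
  rw [star_mulVec_dotProduct, hH]

theorem card_le_card_of_conjTranspose_mul_self_eq_one [DecidableEq ι] {X : Matrix m ι ℍ[ℝ]} (hX : Xᴴ * X = 1) :
    Fintype.card ι ≤ Fintype.card m := by
  have h : Function.Injective (mulVecEuclidean X) := by
    intro v w hvw
    have h1 : X *ᵥ v.ofLp = X *ᵥ w.ofLp := congrArg WithLp.ofLp hvw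
    have h2 := congrArg (Xᴴ *ᵥ ·) h1
    simp only [mulVec_mulVec, hX, one_mulVec] at h2
    exact WithLp.ofLp_injective 2 h2
  have := LinearMap.finrank_le_finrank_of_injective h
  rw [finrank_quaternion_euclidean, finrank_quaternion_euclidean] at this
  omega

theorem exists_unit_eigenvector {H : Matrix m m ℍ[ℝ]} (hH : Hᴴ = H) {X : Matrix m ι ℍ[ℝ]}
    {C : Matrix ι ι ℍ[ℝ]} (hX : H * X = X * C) (hc : Fintype.card ι < Fintype.card m) :
    ∃ (v : m → ℍ[ℝ]) (μ : ℝ), star v ⬝ᵥ v = 1 ∧ Xᴴ *ᵥ v = 0 ∧ H *ᵥ v = μ • v := by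
  have hXH : Xᴴ * H = Cᴴ * Xᴴ := by
    have := congrArg conjTranspose hX
    rwa [conjTranspose_mul, conjTranspose_mul, hH] at this
  set K := (mulVecEuclidean Xᴴ).ker with hK
  have hKbot : K ≠ ⊥ := LinearMap.ker_ne_bot_of_finrank_lt (by
    rw [finrank_quaternion_euclidean, finrank_quaternion_euclidean]; omega)
  have hmem : ∀ v, v ∈ K ↔ Xᴴ *ᵥ v.ofLp = 0 := by
    intro v
    rw [hK, LinearMap.mem_ker]
    exact WithLp.toLp_eq_zero 2
  have hinv : ∀ v ∈ K, mulVecEuclidean H v ∈ K := by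
    intro v hv
    rw [hmem] at hv ⊢
    change Xᴴ *ᵥ (H *ᵥ v.ofLp) = 0
    rw [mulVec_mulVec, hXH, ← mulVec_mulVec, hv, mulVec_zero]
  have hnt : Nontrivial K := Submodule.nontrivial_iff_ne_bot.mpr hKbot
  obtain ⟨⟨v, hvK⟩, hv⟩ := ((mulVecEuclidean_isSymmetric hH).restrict_invariant
    hinv).hasEigenvalue_iSup_of_finiteDimensional.exists_hasEigenvector
  generalize ((⨆ x : { x : K // x ≠ 0 }, _ : ℝ) : ℝ) = μ at hv
  have hv1 : H *ᵥ v.ofLp = μ • v.ofLp := by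
    have := congrArg (fun u : K => u.1.ofLp) hv.apply_eq_smul
    exact this
  have hv0 : v.ofLp ≠ 0 := by
    intro h
    refine hv.2 (Subtype.ext ?_)
    exact (WithLp.ofLp_eq_zero 2).mp h
  have hsum := star_dotProduct_self_eq_coe v.ofLp
  set s : ℝ := ∑ i, Quaternion.normSq (v.ofLp i)
  have hs0 : 0 ≤ s := nonneg_of_star_dotProduct_self_eq hsum
  have hs1 : s ≠ 0 := by
    intro h
    refine hv0 (eq_zero_of_star_dotProduct_self_eq_zero ?_)
    rw [hsum, h, Quaternion.coe_zero]
  refine ⟨(√s)⁻¹ • v.ofLp, μ, ?_, ?_, ?_⟩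
  · rw [star_smul_dotProduct_smul, hsum, ← mul_inv, Real.mul_self_sqrt hs0,
      ← Quaternion.coe_smul, smul_eq_mul, inv_mul_cancel₀ hs1, Quaternion.coe_one]
  · rw [mulVec_smul, (hmem v).mp hvK, smul_zero]
  · rw [mulVec_smul, hv1, smul_comm]

theorem exists_orthonormal_eigenvectors [DecidableEq ι] {H : Matrix m m ℍ[ℝ]} (hH : Hᴴ = H)
    {X : Matrix m ι ℍ[ℝ]} {C : Matrix ι ι ℍ[ℝ]} (hX : H * X = X * C) (k : ℕ)
    (hk : Fintype.card ι + k ≤ Fintype.card m) :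
    ∃ (Y : Matrix m (Fin k) ℍ[ℝ]) (μ : Fin k → ℝ), Yᴴ * Y = 1 ∧ Xᴴ * Y = 0 ∧
      H * Y = Y * diagonal fun i => (μ i : ℍ[ℝ]) := by
  induction k with
  | zero => exact ⟨0, 0, Subsingleton.elim _ _, Subsingleton.elim _ _, Subsingleton.elim _ _⟩
  | succ k ih =>
    obtain ⟨Y, μ, hY, hXY, hHY⟩ := ih (by omega)
    obtain ⟨v, c, hv, hXv, hHv⟩ := exists_unit_eigenvector hH (X := fromCols X Y)
      (C := fromBlocks C 0 0 (diagonal fun i => (μ i : ℍ[ℝ])))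
      (by rw [mul_fromCols, fromCols_mul_fromBlocks, hX, hHY]; simp)
      (by simp; omega)
    rw [conjTranspose_fromCols_eq_fromRows_conjTranspose, fromRows_mulVec] at hXv
    have hXv1 : Xᴴ *ᵥ v = 0 := funext fun i => congrFun hXv (Sum.inl i)
    have hYv : Yᴴ *ᵥ v = 0 := funext fun i => congrFun hXv (Sum.inr i)
    have hvY : ∀ j, star v ⬝ᵥ (fun a => Y a j) = 0 := by
      intro j
      have := congrArg star (congrFun hYv j)
      simpa [mulVec, dotProduct, star_sum] using this
    refine ⟨of fun a => Fin.cons (v a) (Y a), Fin.cons c μ, ?_, ?_, ?_⟩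
    · ext1 i j
      refine Fin.cases ?_ (fun i => ?_) i <;> refine Fin.cases ?_ (fun j => ?_) j
      · simpa [mul_apply, dotProduct] using hv
      · simpa [mul_apply, dotProduct, one_apply, (Fin.succ_ne_zero j).symm] using hvY j
      · simpa [mul_apply, mulVec, dotProduct, one_apply] using congrFun hYv i
      · simpa [mul_apply, one_apply] using congrFun (congrFun hY i) j
    · ext1 i j
      refine Fin.cases ?_ (fun j => ?_) j
      · simpa [mul_apply, mulVec, dotProduct] using congrFun hXv1 i
      · simpa [mul_apply] using congrFun (congrFun hXY i) j
    · ext1 i j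
      rw [mul_diagonal]
      refine Fin.cases ?_ (fun j => ?_) j
      · have := congrFun hHv i
        simpa [mul_apply, mulVec, dotProduct, (Quaternion.coe_commutes c (v i)).symm,
          Quaternion.coe_mul_eq_smul] using this
      · have := congrFun (congrFun hHY i) j
        rw [mul_diagonal] at this
        simpa [mul_apply] using this

theorem UnitarilySimilar.of_mul_eq_mul [DecidableEq m] [DecidableEq ι] {A : Matrix m m ℍ[ℝ]}
    {C : Matrix ι ι ℍ[ℝ]} {V : Matrix m ι ℍ[ℝ]} (e : ι ≃ m) (hV : Vᴴ * V = 1)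
    (hAV : A * V = V * C) : UnitarilySimilar A (C.submatrix e.symm e.symm) := by
  have hV' : V * Vᴴ = 1 :=
    (mul_eq_one_comm_of_card_eq ι m ℍ[ℝ] (Fintype.card_congr e)).mp hV
  refine ⟨Vᴴ.submatrix e.symm id, ?_, ?_⟩
  · rw [IsUnitaryM, conjTranspose_submatrix, conjTranspose_conjTranspose,
      submatrix_mul_equiv, hV', submatrix_id_id]
  · rw [conjTranspose_submatrix, conjTranspose_conjTranspose, submatrix_mul_equiv,
      submatrix_mul_equiv, submatrix_id_id, ← hAV, Matrix.mul_assoc, hV', Matrix.mul_one]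

theorem exists_unitarilySimilar_projCanon {n : ℕ} (A : Matrix (Fin n) (Fin n) ℍ[ℝ])
    (hA : A * A = A) :
    ∃ (p q r : ℕ) (b : Fin p → ℝ) (e : ((Fin 2 × Fin p) ⊕ (Fin q ⊕ Fin r)) ≃ Fin n),
      (∀ t, 0 < b t) ∧
      UnitarilySimilar A ((projCanon p q r b).submatrix e.symm e.symm) := by
  classical
  obtain ⟨X, d, hX, -, hAX⟩ := exists_orthonormal_eigenvectors (H := A * Aᴴ) (by simp)
    (X := (0 : Matrix (Fin n) (Fin 0) ℍ[ℝ])) (C := 0) (by simp) n (by simp)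
  have hX' : X * Xᴴ = 1 := mul_eq_one_comm.mp hX
  set x : Fin n → Fin n → ℍ[ℝ] := fun i a => X a i with hx
  have hxx : ∀ i j, star (x i) ⬝ᵥ x j = if i = j then 1 else 0 := fun i j => by
    simpa [mul_apply, one_apply, dotProduct] using congrFun (congrFun hX i) j
  have hAA : ∀ i, A *ᵥ (Aᴴ *ᵥ x i) = d i • x i := fun i => by
    rw [mulVec_mulVec]
    ext1 a
    have := congrFun (congrFun hAX a) i
    rw [mul_diagonal, Quaternion.mul_coe_eq_smul] at this
    exact this
  have hAx : ∀ i, d i ≠ 0 → A *ᵥ x i = x i := fun i hi => by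
    have h : A *ᵥ (d i • x i) = d i • x i := by
      rw [← hAA, mulVec_mulVec _ A A, hA]
    rw [mulVec_smul] at h
    exact smul_right_injective _ hi h
  have hAdj : ∀ i, star (Aᴴ *ᵥ x i) ⬝ᵥ (Aᴴ *ᵥ x i) = ((d i : ℝ) : ℍ[ℝ]) := fun i => by
    rw [star_mulVec_dotProduct, conjTranspose_conjTranspose, hAA, dotProduct_smul, hxx, if_pos rfl,
      ← Quaternion.coe_one, ← Quaternion.coe_smul, smul_eq_mul, mul_one]
  set z : Fin n → Fin n → ℍ[ℝ] := fun i => Aᴴ *ᵥ x i - x i with hz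
  have hxz : ∀ i j, d i ≠ 0 → star (x i) ⬝ᵥ z j = 0 := fun i j hi => by
    have h := star_mulVec_dotProduct A (x i) (x j)
    rw [hAx i hi] at h
    rw [hz, dotProduct_sub, ← h, sub_self]
  have hzx : ∀ i j, d j ≠ 0 → star (z i) ⬝ᵥ x j = 0 := fun i j hj => by
    rw [star_dotProduct, hxz j i hj, star_zero]
  have hAz : ∀ i, d i ≠ 0 → A *ᵥ z i = (d i - 1) • x i := fun i hi => by
    rw [hz, mulVec_sub, hAA, hAx i hi, sub_smul, one_smul]
  have hzz : ∀ i j, d i ≠ 0 → d j ≠ 0 →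
      star (z i) ⬝ᵥ z j = (d j - 1) • (if i = j then 1 else 0) := fun i j hi hj => by
    have h : star (Aᴴ *ᵥ x i) ⬝ᵥ z j = (d j - 1) • (if i = j then 1 else 0) := by
      rw [star_mulVec_dotProduct, conjTranspose_conjTranspose, hAz j hj, dotProduct_smul, hxx]
    rw [← h, show Aᴴ *ᵥ x i = z i + x i by simp [hz], star_add, add_dotProduct, hxz i j hi,
      add_zero]
  have hd : ∀ i, d i = 0 ∨ d i = 1 ∨ 1 < d i := fun i => by
    by_cases h0 : d i = 0
    · exact Or.inl h0
    · have h := hzz i i h0 h0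
      rw [if_pos rfl, ← Quaternion.coe_one, ← Quaternion.coe_smul, smul_eq_mul, mul_one] at h
      have := nonneg_of_star_dotProduct_self_eq h
      rcases eq_or_lt_of_le (sub_nonneg.mp this) with h1 | h1
      · exact Or.inr (Or.inl h1.symm)
      · exact Or.inr (Or.inr h1)
  set T := (Fintype.equivFin {i // 1 < d i}).symm
  set S := (Fintype.equivFin {i // d i = 1}).symm
  set p := Fintype.card {i // 1 < d i}
  set q := Fintype.card {i // d i = 1}
  set b : Fin p → ℝ := fun t => √(d (T t) - 1) with hb
  have hb0 : ∀ t, 0 < b t := fun t => Real.sqrt_pos.mpr (sub_pos.mpr (T t).2)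
  have hbsq : ∀ t, d (T t) - 1 = b t * b t := fun t =>
    (Real.mul_self_sqrt (sub_pos.mpr (T t).2).le).symm
  have hT0 : ∀ t, d (T t) ≠ 0 := fun t => (zero_lt_one.trans (T t).2).ne'
  have hS0 : ∀ t, d (S t) ≠ 0 := fun t => by rw [(S t).2]; exact one_ne_zero
  set P : Matrix (Fin n) (Fin 2 × Fin p) ℍ[ℝ] :=
    of fun a st => (![x (T st.2), (b st.2)⁻¹ • z (T st.2)] : Fin 2 → Fin n → ℍ[ℝ]) st.1 a with hP
  set Q : Matrix (Fin n) (Fin q) ℍ[ℝ] := of fun a s => x (S s) a with hQ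
  have hTinj : ∀ t t', (T t : Fin n) = T t' ↔ t = t' := fun t t' => by
    rw [Subtype.coe_inj, T.injective.eq_iff]
  have hSinj : ∀ t t', (S t : Fin n) = S t' ↔ t = t' := fun t t' => by
    rw [Subtype.coe_inj, S.injective.eq_iff]
  have hTS : ∀ t s, (T t : Fin n) ≠ S s := fun t s h => by
    have h1 := (T t).2
    rw [h, (S s).2] at h1
    exact lt_irrefl _ h1
  have hPP : Pᴴ * P = 1 := by
    ext1 ⟨s, t⟩ ⟨s', t'⟩
    change star ((![x (T t), (b t)⁻¹ • z (T t)] : Fin 2 → Fin n → ℍ[ℝ]) s) ⬝ᵥ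
      ((![x (T t'), (b t')⁻¹ • z (T t')] : Fin 2 → Fin n → ℍ[ℝ]) s') = _
    fin_cases s <;> fin_cases s'
    · simp [hxx, hTinj, one_apply]
    · simp [hxz _ _ (hT0 t), dotProduct_smul, one_apply]
    · have := star_smul_dotProduct_smul (b t)⁻¹ 1 (z (T t)) (x (T t'))
      simpa [hzx _ _ (hT0 t'), one_apply] using this
    · have := star_smul_dotProduct_smul (b t)⁻¹ (b t')⁻¹ (z (T t)) (z (T t'))
      rw [hzz _ _ (hT0 t) (hT0 t'), hbsq, smul_smul] at this
      have h0 := (hb0 t').ne'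
      by_cases htt : t = t'
      · subst htt
        rw [if_pos rfl, show (b t)⁻¹ * (b t)⁻¹ * (b t * b t) = 1 by field_simp, one_smul] at this
        simpa [one_apply] using this
      · rw [if_neg (by rwa [hTinj]), smul_zero] at this
        simpa [one_apply, htt] using this
  have hPQ : Pᴴ * Q = 0 := by
    ext1 ⟨s, t⟩ s'
    change star ((![x (T t), (b t)⁻¹ • z (T t)] : Fin 2 → Fin n → ℍ[ℝ]) s) ⬝ᵥ x (S s') = _
    fin_cases s
    · simp [hxx, hTS]
    · have := star_smul_dotProduct_smul (b t)⁻¹ 1 (z (T t)) (x (S s'))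
      simpa [hzx _ _ (hS0 s')] using this
  have hQP : Qᴴ * P = 0 := by
    have := congrArg conjTranspose hPQ
    simpa using this
  have hQQ : Qᴴ * Q = 1 := by
    ext1 s s'
    change star (x (S s)) ⬝ᵥ x (S s') = _
    simp [hxx, hSinj, one_apply]
  have hPQo : (fromCols P Q)ᴴ * fromCols P Q = 1 := by
    rw [conjTranspose_fromCols_eq_fromRows_conjTranspose, fromRows_mul_fromCols, hPP, hPQ, hQP,
      hQQ, fromBlocks_one]
  have hcard := card_le_card_of_conjTranspose_mul_self_eq_one hPQo
  obtain ⟨r, hr⟩ := Nat.exists_eq_add_of_le hcard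
  obtain ⟨W, -, hWW, hPQW, -⟩ := exists_orthonormal_eigenvectors (H := 0)
    (conjTranspose_zero) (X := fromCols P Q) (C := 0) (by simp) r hr.ge
  rw [conjTranspose_fromCols_eq_fromRows_conjTranspose, fromRows_mul] at hPQW
  have hPW : Pᴴ * W = 0 := by
    ext1 i j; exact congrFun (congrFun hPQW (Sum.inl i)) j
  have hQW : Qᴴ * W = 0 := by
    ext1 i j; exact congrFun (congrFun hPQW (Sum.inr i)) j
  have hWP : Wᴴ * P = 0 := by simpa using congrArg conjTranspose hPW
  have hWQ : Wᴴ * Q = 0 := by simpa using congrArg conjTranspose hQW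
  have hV : (fromCols P (fromCols Q W))ᴴ * fromCols P (fromCols Q W) = 1 := by
    have hQWo : (fromCols Q W)ᴴ * fromCols Q W = 1 := by
      rw [conjTranspose_fromCols_eq_fromRows_conjTranspose, fromRows_mul_fromCols, hQQ, hQW, hWQ,
        hWW, fromBlocks_one]
    rw [conjTranspose_fromCols_eq_fromRows_conjTranspose, fromRows_mul_fromCols, hQWo,
      mul_fromCols, conjTranspose_fromCols_eq_fromRows_conjTranspose, fromRows_mul, hPP, hPQ, hPW,
      hQP, hWP, fromCols_zero, fromRows_zero, fromBlocks_one]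
  have hAP : A * P = P * blockDiagonal fun t => !![1, (b t : ℍ[ℝ]); 0, 0] := by
    ext1 a ⟨s, t⟩
    have h1 := congrFun (hAx _ (hT0 t)) a
    have h2 := congrFun (hAz _ (hT0 t)) a
    rw [mul_apply, mul_apply, Fintype.sum_prod_type, Fin.sum_univ_two]
    change (A *ᵥ ((![x (T t), (b t)⁻¹ • z (T t)] : Fin 2 → Fin n → ℍ[ℝ]) s)) a = _
    fin_cases s
    · simpa [blockDiagonal_apply, hP] using h1
    · have h0 := (hb0 t).ne'
      have h3 : (A *ᵥ ((b t)⁻¹ • z (T t))) a = b t • x (T t) a := by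
        rw [mulVec_smul, Pi.smul_apply, h2, hbsq, Pi.smul_apply, smul_smul,
          inv_mul_cancel_left₀ h0]
      simpa [blockDiagonal_apply, hP, Quaternion.mul_coe_eq_smul] using h3
  have hAQ : A * Q = Q := by
    ext1 a s
    exact congrFun (hAx _ (hS0 s)) a
  have hXAW : Xᴴ * (A * W) = 0 := by
    ext1 i j
    change star (x i) ⬝ᵥ (A *ᵥ fun a => W a j) = 0
    set w : Fin n → ℍ[ℝ] := fun a => W a j
    have hadj := star_mulVec_dotProduct Aᴴ (x i) w
    rw [conjTranspose_conjTranspose] at hadj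
    rw [← hadj]
    rcases hd i with h | h | h
    · have := hAdj i
      rw [h, Quaternion.coe_zero] at this
      rw [eq_zero_of_star_dotProduct_self_eq_zero this, star_zero, zero_dotProduct]
    · have hz0 := hzz i i (by simp [h]) (by simp [h])
      rw [h, sub_self, zero_smul] at hz0
      have := eq_zero_of_star_dotProduct_self_eq_zero hz0
      rw [hz, sub_eq_zero] at this
      rw [this]
      obtain ⟨s, hs⟩ := S.surjective ⟨i, h⟩
      have hw : star (x (S s)) ⬝ᵥ w = 0 := congrFun (congrFun hQW s) j
      rwa [hs] at hw
    · obtain ⟨t, ht⟩ := T.surjective ⟨i, h⟩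
      have hw1 : star (x (T t)) ⬝ᵥ w = 0 := congrFun (congrFun hPW (0, t)) j
      have hw2 : star ((b t)⁻¹ • z (T t)) ⬝ᵥ w = 0 := congrFun (congrFun hPW (1, t)) j
      have hw3 : star (z (T t)) ⬝ᵥ w = 0 := by
        have := star_smul_dotProduct_smul (b t)⁻¹ 1 (z (T t)) w
        rw [one_smul, hw2] at this
        exact (smul_eq_zero.mp this.symm).resolve_left (by simpa using (hb0 t).ne')
      rw [ht] at hw1 hw3
      rw [show Aᴴ *ᵥ x i = z i + x i by simp [hz], star_add, add_dotProduct, hw1, hw3, add_zero]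
  have hAW : A * W = 0 := by
    rw [← Matrix.one_mul (A * W), ← hX', Matrix.mul_assoc, hXAW, Matrix.mul_zero]
  have hAV : A * fromCols P (fromCols Q W) = fromCols P (fromCols Q W) * projCanon p q r b := by
    rw [projCanon, fromCols_mul_fromBlocks, mul_fromCols, mul_fromCols, fromCols_mul_fromBlocks,
      hAP, hAQ, hAW]
    simp
  have hcard' : Fintype.card ((Fin 2 × Fin p) ⊕ (Fin q ⊕ Fin r)) = n := by
    simp only [Fintype.card_sum, Fintype.card_prod, Fintype.card_fin] at hr ⊢
    omega
  exact ⟨p, q, r, b, Fintype.equivFinOfCardEq hcard', hb0,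
    UnitarilySimilar.of_mul_eq_mul _ hV hAV⟩

theorem sum_comp_eq_of_mul_diagonal_eq [DecidableEq m] {V : Matrix m m ℍ[ℝ]} (hV : Vᴴ * V = 1)
    {d d' : m → ℝ}
    (h : V * diagonal (fun i => (d i : ℍ[ℝ])) = diagonal (fun i => (d' i : ℍ[ℝ])) * V)
    (f : ℝ → ℝ) : ∑ i, f (d i) = ∑ i, f (d' i) := by
  have hV' : V * Vᴴ = 1 := mul_eq_one_comm.mp hV
  have key : V * diagonal (fun i => (f (d i) : ℍ[ℝ])) =
      diagonal (fun i => (f (d' i) : ℍ[ℝ])) * V := by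
    ext1 i j
    have hij := congrFun (congrFun h i) j
    rw [mul_diagonal, diagonal_mul, Quaternion.mul_coe_eq_smul, Quaternion.coe_mul_eq_smul] at hij ⊢
    by_cases hd : d j = d' i
    · rw [hd]
    · have : V i j = 0 := by
        have h0 : (d j - d' i) • V i j = 0 := by rw [sub_smul, hij, sub_self]
        exact (smul_eq_zero.mp h0).resolve_left (sub_ne_zero.mpr hd)
      rw [this, smul_zero, smul_zero]
  have tr_comm : ∀ M N : Matrix m m ℍ[ℝ], (trace (M * N)).re = (trace (N * M)).re := by
    intro M N
    simp only [trace, diag_apply, mul_apply, Quaternion.re_sum]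
    rw [Finset.sum_comm]
    exact Finset.sum_congr rfl fun i _ => Finset.sum_congr rfl fun j _ => Quaternion.re_mul_comm _ _
  have tr_diag : ∀ c : m → ℝ, (trace (diagonal fun i => (c i : ℍ[ℝ]))).re = ∑ i, c i := by
    intro c
    simp [trace, Quaternion.re_sum]
  rw [← tr_diag, ← tr_diag]
  calc _ = (trace (Vᴴ * (V * diagonal (fun i => (f (d i) : ℍ[ℝ]))))).re := by
        rw [← Matrix.mul_assoc, hV, Matrix.one_mul]
    _ = _ := by rw [tr_comm, key, Matrix.mul_assoc, hV', Matrix.mul_one]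

theorem projCanon_mul_conjTranspose (p q r : ℕ) (b : Fin p → ℝ) :
    projCanon p q r b * (projCanon p q r b)ᴴ =
      diagonal fun j => ((Sum.elim (fun st => ![1 + b st.2 ^ 2, 0] st.1)
        (Sum.elim (fun _ => 1) fun _ => 0) j : ℝ) : ℍ[ℝ]) := by
  rw [projCanon, fromBlocks_conjTranspose, fromBlocks_multiply, fromBlocks_conjTranspose,
    fromBlocks_multiply, blockDiagonal_conjTranspose, ← blockDiagonal_mul]
  ext1 i j
  rcases i with ⟨s, t⟩ | i | i <;> rcases j with ⟨s', t'⟩ | j | j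
  · simp only [conjTranspose_zero, Matrix.mul_zero, Matrix.zero_mul, add_zero,
      fromBlocks_apply₁₁, blockDiagonal_apply, diagonal_apply, Sum.inl.injEq, Prod.mk.injEq,
      Sum.elim_inl]
    by_cases htt : t = t'
    · subst htt
      fin_cases s <;> fin_cases s' <;> simp [mul_apply, Fin.sum_univ_two, sq]
    · simp [htt]
  all_goals simp [diagonal_apply, one_apply]

theorem sum_eq_of_unitarilySimilar_projCanon {n : ℕ} {A : Matrix (Fin n) (Fin n) ℍ[ℝ]}
    {p q r p' q' r' : ℕ} {b : Fin p → ℝ} {b' : Fin p' → ℝ}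
    {e : ((Fin 2 × Fin p) ⊕ (Fin q ⊕ Fin r)) ≃ Fin n}
    {e' : ((Fin 2 × Fin p') ⊕ (Fin q' ⊕ Fin r')) ≃ Fin n}
    (h : UnitarilySimilar A ((projCanon p q r b).submatrix e.symm e.symm))
    (h' : UnitarilySimilar A ((projCanon p' q' r' b').submatrix e'.symm e'.symm)) (f : ℝ → ℝ) :
    ∑ t, f (1 + b t ^ 2) + p * f 0 + (q * f 1 + r * f 0) =
      ∑ t, f (1 + b' t ^ 2) + p' * f 0 + (q' * f 1 + r' * f 0) := by
  have key : ∀ {p q r : ℕ} {b : Fin p → ℝ} {e : ((Fin 2 × Fin p) ⊕ (Fin q ⊕ Fin r)) ≃ Fin n},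
      UnitarilySimilar A ((projCanon p q r b).submatrix e.symm e.symm) →
      ∃ (U : Matrix (Fin n) (Fin n) ℍ[ℝ]) (d : Fin n → ℝ), Uᴴ * U = 1 ∧ U * Uᴴ = 1 ∧
        A * Aᴴ = Uᴴ * diagonal (fun i => (d i : ℍ[ℝ])) * U ∧
        ∑ i, f (d i) = ∑ t, f (1 + b t ^ 2) + p * f 0 + (q * f 1 + r * f 0) := by
    rintro p q r b e ⟨U, hU, hAU⟩
    have hU' : U * Uᴴ = 1 := mul_eq_one_comm.mp hU
    set δ : (Fin 2 × Fin p) ⊕ (Fin q ⊕ Fin r) → ℝ :=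
      Sum.elim (fun st => ![1 + b st.2 ^ 2, 0] st.1) (Sum.elim (fun _ => 1) fun _ => 0) with hδ
    refine ⟨U, δ ∘ e.symm, hU, hU', ?_, ?_⟩
    · have hD := congrArg (fun M => M.submatrix e.symm e.symm)
        (projCanon_mul_conjTranspose p q r b)
      simp only [← submatrix_mul_equiv _ _ e.symm e.symm e.symm, submatrix_diagonal_equiv] at hD
      change _ = diagonal (fun i => ((δ ∘ e.symm) i : ℍ[ℝ])) at hD
      rw [← hD, hAU, conjTranspose_mul, conjTranspose_mul, conjTranspose_conjTranspose,
        conjTranspose_submatrix]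
      simp only [Matrix.mul_assoc]
      rw [← Matrix.mul_assoc U Uᴴ, hU', Matrix.one_mul]
    · change ∑ i, f (δ (e.symm i)) = _
      rw [Equiv.sum_comp e.symm fun j => f (δ j), Fintype.sum_sum_type, Fintype.sum_sum_type,
        Fintype.sum_prod_type, Fin.sum_univ_two]
      simp [hδ]
  obtain ⟨U, d, hU, hU', hAU, hd⟩ := key h
  obtain ⟨U₁, d₁, hU₁, hU₁', hAU₁, hd₁⟩ := key h'
  rw [← hd, ← hd₁]
  refine sum_comp_eq_of_mul_diagonal_eq (V := U₁ * Uᴴ) ?_ ?_ f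
  · rw [conjTranspose_mul, conjTranspose_conjTranspose, Matrix.mul_assoc, ← Matrix.mul_assoc U₁ᴴ,
      hU₁, Matrix.one_mul, hU']
  · have h1 := congrArg (fun M => U₁ * M * Uᴴ) (hAU.symm.trans hAU₁)
    simp only [Matrix.mul_assoc, hU', Matrix.mul_one] at h1
    rw [← Matrix.mul_assoc U₁ U₁ᴴ, hU₁', Matrix.one_mul] at h1
    rw [Matrix.mul_assoc, h1]

theorem projCanon_unique {n : ℕ} {A : Matrix (Fin n) (Fin n) ℍ[ℝ]}
    {p q r p' q' r' : ℕ} {b : Fin p → ℝ} {b' : Fin p' → ℝ}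
    {e : ((Fin 2 × Fin p) ⊕ (Fin q ⊕ Fin r)) ≃ Fin n}
    {e' : ((Fin 2 × Fin p') ⊕ (Fin q' ⊕ Fin r')) ≃ Fin n} (hb : ∀ t, 0 < b t)
    (hb' : ∀ t, 0 < b' t)
    (h : UnitarilySimilar A ((projCanon p q r b).submatrix e.symm e.symm))
    (h' : UnitarilySimilar A ((projCanon p' q' r' b').submatrix e'.symm e'.symm)) :
    p = p' ∧ q = q' ∧ r = r' ∧ ∃ σ : Fin p ≃ Fin p', ∀ t, b t = b' (σ t) := by
  have hsum := sum_eq_of_unitarilySimilar_projCanon h h'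
  have hg : ∀ g : ℝ → ℝ, ∑ t, g (b t) = ∑ t, g (b' t) := by
    intro g
    have := hsum fun y => if 1 < y then g √(y - 1) else 0
    have e1 : ∀ c : ℝ, 0 < c → (if 1 < 1 + c ^ 2 then g √(1 + c ^ 2 - 1) else 0) = g c := by
      intro c hc
      rw [if_pos (by nlinarith [sq_nonneg c, mul_pos hc hc]), add_sub_cancel_left,
        Real.sqrt_sq hc.le]
    simp only [e1 _ (hb _), e1 _ (hb' _)] at this
    simpa [not_lt.mpr (zero_le_one (α := ℝ))] using this
  have hp : p = p' := by simpa using hg fun _ => 1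
  have hq : q = q' := by
    have := hsum fun y => if y = 1 then 1 else 0
    simpa [(hb _).ne', (hb' _).ne'] using this
  have hr : r = r' := by
    subst hp hq
    have e1 : ∀ c : ℝ, 1 + c ^ 2 ≠ 0 := fun c => by positivity
    have := hsum fun y => if y = 0 then 1 else 0
    simpa [e1] using this
  subst hp
  refine ⟨rfl, hq, hr, ?_⟩
  have hfib : ∀ c, Nonempty ({t // b t = c} ≃ {t // b' t = c}) := by
    classical
    intro c
    rw [← Fintype.card_eq, Fintype.card_subtype, Fintype.card_subtype]
    have := hg fun y => if y = c then 1 else 0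
    simpa only [Finset.sum_boole, Nat.cast_inj] using this
  exact ⟨Equiv.ofFiberEquiv fun c => (hfib c).some,
    fun t => (Equiv.ofFiberEquiv_map _ t).symm⟩

end Quaternionic

/-- **Theorem 3.1(a).** Every quaternion idempotent matrix is unitarily similar to a direct
sum of blocks `[[1,b],[0,0]]` (`b > 0`), `[1]`, and `[0]`, and this direct sum is uniquely
determined up to permutation of the summands. -/
theorem idempotent_canonical_form {n : ℕ} (A : Matrix (Fin n) (Fin n) ℍ[ℝ])
    (hA : A * A = A) :
    ∃ (p q r : ℕ) (b : Fin p → ℝ) (e : ((Fin 2 × Fin p) ⊕ (Fin q ⊕ Fin r)) ≃ Fin n),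
      (∀ t, 0 < b t) ∧
      UnitarilySimilar A ((projCanon p q r b).submatrix e.symm e.symm) ∧
      ∀ (p' q' r' : ℕ) (b' : Fin p' → ℝ)
        (e' : ((Fin 2 × Fin p') ⊕ (Fin q' ⊕ Fin r')) ≃ Fin n),
        (∀ t, 0 < b' t) →
        UnitarilySimilar A ((projCanon p' q' r' b').submatrix e'.symm e'.symm) →
        p = p' ∧ q = q' ∧ r = r' ∧ ∃ σ : Fin p ≃ Fin p', ∀ t, b t = b' (σ t) := by
  obtain ⟨p, q, r, b, e, hb, h⟩ := exists_unitarilySimilar_projCanon A hA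
  exact ⟨p, q, r, b, e, hb, h, fun p' q' r' b' e' hb' h' => projCanon_unique hb hb' h h'⟩
end
end
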